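/- arXiv:2208.01628 — 2 statements merged into one kernel-verified Lean document; each statement's English description precedes it below -/
import Mathlib

section
/- Let ω = e^{2πi/3}, Λ = ℤω ⊕ ℤ, ⟨z,w⟩ := Re(z·conj(w)), K = 4π/3, and let F_k be defined via the theta function as below. Let U : ℂ → ℂ be real-analytic with U(z+γ) = e^{i⟨γ,K⟩}U(z) for all γ ∈ Λ and U(ωz) = ωU(z). Let α ∈ ℂ and let u = (u₁,u₂) : ℂ → ℂ² be real-analytic with (D(α)+K)u = 0 on ℂ, satisfying the Floquet condition u₁(z+γ) = e^{−i⟨γ,K⟩}u₁(z) and u₂(z+γ) = e^{i⟨γ,K⟩}u₂(z) for all γ ∈ Λ, and suppose u(z₀) = 0 for some z₀ ∈ ℂ. Then for every k ∈ ℂ there exists a real-analytic v : ℂ → ℂ² such that v(z) = F_k(z−z₀)·u(z) for all z ∉ z₀ + Λ, (D(α)+K+k)v = 0 on all of ℂ, v satisfies the same Floquet condition (v₁(z+γ) = e^{−i⟨γ,K⟩}v₁(z), v₂(z+γ) = e^{i⟨γ,K⟩}v₂(z)), and v is not identically zero whenever u is not identically zero. -/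
open Complex

noncomputable section

/-- `ω = e^{2πi/3}`. -/
def ω : ℂ := Complex.exp (2 * (Real.pi : ℂ) * Complex.I / 3)

/-- The hexagonal lattice `Λ = ℤω ⊕ ℤ`. -/
def inΛ (γ : ℂ) : Prop := ∃ m n : ℤ, γ = (m : ℂ) * ω + (n : ℂ)

/-- The pairing `⟨z,w⟩ = Re (z ⬝ conj w)`. -/
def pairing (z w : ℂ) : ℝ := (z * (starRingEnd ℂ) w).re

/-- The Dirac momentum `K = 4π/3`. -/
def Kpt : ℂ := 4 * (Real.pi : ℂ) / 3

/-- The Jacobi theta function `θ₁(z|ω)`. -/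
def θ (z : ℂ) : ℂ :=
  -∑' n : ℤ, Complex.exp ((Real.pi : ℂ) * Complex.I * ((n : ℂ) + 1/2)^2 * ω
      + 2 * (Real.pi : ℂ) * Complex.I * ((n : ℂ) + 1/2) * (z + 1/2))

/-- `z(k) = √3 k/(4πi)`. -/
def zmap (k : ℂ) : ℂ := (Real.sqrt 3 : ℂ) * k / (4 * (Real.pi : ℂ) * Complex.I)

/-- `F_k(z) = e^{(i/2)(z - z̄)k} θ(z - z(k))/θ(z)`. -/
def F (k z : ℂ) : ℂ :=
  Complex.exp ((Complex.I / 2) * (z - (starRingEnd ℂ) z) * k) * θ (z - zmap k) / θ z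

/-- `2 D_{z̄} u = -i (∂_x u + i ∂_y u)`. -/
def Dbar2 (u : ℂ → ℂ) : ℂ → ℂ := fun z =>
  -Complex.I * (fderiv ℝ u z 1 + Complex.I * fderiv ℝ u z Complex.I)

/-- Real-analyticity of a map `ℂ ≅ ℝ² → ℂ`. -/
def RealAnalytic (f : ℂ → ℂ) : Prop := ∀ z : ℂ, AnalyticAt ℝ f z

/-!
Where `u` vanishes, `(D(α) + K)u = 0` gives `2D_{z̄}u = 0` as well, and differentiating the
equation repeatedly shows that all `2D_{z̄}ⁿu` vanish there. In a power series in `z - z₀` and its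
conjugate only the pure powers of the conjugate are not divisible by `z - z₀`, and the values of
`2D_{z̄}ⁿu` at `z₀` are, up to nonzero factors, their coefficients; so `u` is divisible by
`z - z₀` with real-analytic quotient.

By the Floquet condition `u` vanishes on all of `z₀ + Λ`. The zeros of `θ` are simple and are the
points of `Λ`: up to lattice translations they lie in a strip where the sine series of `θ` is
dominated by its first term, a multiple of `sin πz`. Hence `u = θ(z - z₀) h` with `h`
real-analytic, and the solution with momentum shifted by `k` is `h` times the numerator of
`F_k(z - z₀)`, on which `2D_{z̄}` acts as `-k`. Identities for `h` hold where `θ(z - z₀) ≠ 0`, hence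
everywhere by density.
-/

section AnalyticDivision

open Filter Topology ComplexConjugate

variable {E : Type*} [NormedAddCommGroup E] [NormedSpace ℂ E]

lemma exists_eq_smul_add_conj_smul (L : ℂ →L[ℝ] E) :
    ∃ a b : E, ‖a‖ ≤ ‖L‖ ∧ ‖b‖ ≤ ‖L‖ ∧ ∀ z, L z = z • a + conj z • b := by
  have norm_one : ‖L 1‖ ≤ ‖L‖ := by simpa using L.le_opNorm 1
  have norm_I : ‖I • L I‖ ≤ ‖L‖ := by simpa [norm_smul] using L.le_opNorm I
  have norm_half (x : E) : ‖(2⁻¹ : ℂ) • x‖ = ‖x‖ / 2 := by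
    rw [norm_smul, norm_inv, Complex.norm_two, inv_mul_eq_div]
  refine ⟨(2⁻¹ : ℂ) • (L 1 - I • L I), (2⁻¹ : ℂ) • (L 1 + I • L I), ?_, ?_, fun z => ?_⟩
  · rw [norm_half]
    linarith [norm_sub_le (L 1) (I • L I)]
  · rw [norm_half]
    linarith [norm_add_le (L 1) (I • L I)]
  · have L_apply : L z = z.re • L 1 + z.im • L I := by
      rw [← map_smul, ← map_smul, ← map_add]
      simp [re_add_im]
    rw [L_apply, ← Complex.coe_smul, ← Complex.coe_smul, re_eq_add_conj, im_eq_sub_conj]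
    match_scalars
    · ring
    · field_simp
      linear_combination (z - conj z) * I_sq

lemma exists_diag_eq_smul_add_conj_pow_smul (n : ℕ)
    (p : ContinuousMultilinearMap ℝ (fun _ : Fin (n + 1) => ℂ) E) :
    ∃ (r : ContinuousMultilinearMap ℝ (fun _ : Fin n => ℂ) E) (c : E),
      ‖r‖ ≤ (n + 1) * ‖p‖ ∧ ‖c‖ ≤ ‖p‖ ∧
      ∀ z : ℂ, p (fun _ => z) = z • r (fun _ => z) + conj z ^ (n + 1) • c := by
  have diag_eq (m : ℕ) (p : ContinuousMultilinearMap ℝ (fun _ : Fin (m + 1) => ℂ) E) (z : ℂ) :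
      p (fun _ => z) = p.curryLeft z (fun _ => z) := by
    rw [p.curryLeft_apply]
    congr 1
    ext i
    refine Fin.cases ?_ (fun j => ?_) i <;> simp
  induction n with
  | zero =>
    obtain ⟨a, b, ha, hb, hab⟩ := exists_eq_smul_add_conj_smul p.curryLeft
    rw [p.curryLeft_norm] at ha hb
    refine ⟨a, b 0, by simpa using ha, ?_, fun z => ?_⟩
    · exact (by simp : ‖b 0‖ ≤ ‖b‖).trans hb
    · rw [diag_eq, hab, add_apply, smul_apply, smul_apply, zero_add, pow_one,
        Subsingleton.elim (0 : Fin 0 → ℂ) fun _ => z]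
  | succ n ih =>
    obtain ⟨a, b, ha, hb, hab⟩ := exists_eq_smul_add_conj_smul p.curryLeft
    rw [p.curryLeft_norm] at ha hb
    obtain ⟨r, c, hr, hc, hrc⟩ := ih b
    let conjSmul : ℂ →L[ℝ] ContinuousMultilinearMap ℝ (fun _ : Fin n => ℂ) E :=
      (conjCLE : ℂ →L[ℝ] ℂ).smulRight r
    have norm_conjSmul : ‖conjSmul‖ ≤ ‖r‖ :=
      ContinuousLinearMap.opNorm_le_bound _ (norm_nonneg _) fun z => by
        simp [conjSmul, norm_smul, mul_comm]
    let conjMul : ContinuousMultilinearMap ℝ (fun _ : Fin (n + 1) => ℂ) E :=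
      ContinuousLinearMap.uncurryLeft (Ei := fun _ : Fin (n + 1) => ℂ) conjSmul
    have norm_conjMul : ‖conjMul‖ ≤ ‖r‖ :=
      (ContinuousLinearMap.uncurryLeft_norm (Ei := fun _ : Fin (n + 1) => ℂ) _).trans_le
        norm_conjSmul
    have conjMul_diag (z : ℂ) : conjMul (fun _ => z) = conj z • r (fun _ => z) := rfl
    refine ⟨a + conjMul, c, ?_, hc.trans hb, fun z => ?_⟩
    · have : (n + 1 : ℝ) * ‖b‖ ≤ (n + 1) * ‖p‖ := by gcongr
      push_cast
      linarith [norm_add_le a conjMul]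
    · rw [diag_eq, hab, add_apply, smul_apply, smul_apply, hrc, add_apply, conjMul_diag]
      module

lemma radius_pos_of_norm_le {𝕜 G H : Type*} [NontriviallyNormedField 𝕜] [NormedAddCommGroup G]
    [NormedSpace 𝕜 G] [NormedAddCommGroup H] [NormedSpace 𝕜 H] {p : FormalMultilinearSeries 𝕜 G H}
    {C a : ℝ} (ha : 0 < a) (hp : ∀ n, ‖p n‖ ≤ C * a ^ n) : 0 < p.radius := by
  have radius_ge : ((Real.toNNReal a⁻¹ : NNReal) : ENNReal) ≤ p.radius := by
    refine p.le_radius_of_bound C fun n => ?_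
    rw [Real.coe_toNNReal _ (by positivity), inv_pow, ← div_eq_mul_inv, div_le_iff₀ (by positivity)]
    exact hp n
  exact lt_of_lt_of_le (by simpa using ha) radius_ge

lemma tendsto_sub_nhds_zero (z₀ : ℂ) : Tendsto (fun z => z - z₀) (𝓝 z₀) (𝓝 0) :=
  tendsto_sub_nhds_zero_iff.2 tendsto_id

lemma tendsto_conj_sub_nhds_zero (z₀ : ℂ) : Tendsto (fun z => conj (z - z₀)) (𝓝 z₀) (𝓝 0) :=
  (continuous_conj.tendsto' 0 0 (map_zero _)).comp (tendsto_sub_nhds_zero z₀)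

lemma exists_eventually_eq_sub_smul_add_comp_conj [CompleteSpace E] {f : ℂ → E} {z₀ : ℂ}
    (hf : AnalyticAt ℝ f z₀) :
    ∃ g k : ℂ → E, AnalyticAt ℝ g z₀ ∧ AnalyticAt ℂ k 0 ∧
      ∀ᶠ z in 𝓝 z₀, f z = (z - z₀) • g z + k (conj (z - z₀)) := by
  obtain ⟨p, R, hp⟩ := hf
  choose r c norm_r norm_c hrc using fun n => exists_diag_eq_smul_add_conj_pow_smul n (p (n + 1))
  obtain ⟨C, a, _, ha, norm_p⟩ := p.le_mul_pow_of_radius_pos (hp.r_pos.trans_le hp.r_le)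
  let P : FormalMultilinearSeries ℝ ℂ E := r
  let Q : FormalMultilinearSeries ℂ ℂ E := fun n => .mkPiRing ℂ (Fin n) (c n)
  have hP : 0 < P.radius := by
    refine radius_pos_of_norm_le (C := C * a) (a := 2 * a) (by positivity) fun n => ?_
    have succ_le : (n + 1 : ℝ) ≤ 2 ^ n := mod_cast Nat.lt_two_pow_self
    calc ‖P n‖ ≤ (n + 1) * ‖p (n + 1)‖ := norm_r n
      _ ≤ 2 ^ n * (C * a ^ (n + 1)) := by gcongr; exact norm_p _
      _ = C * a * (2 * a) ^ n := by ring
  have hQ : 0 < Q.radius := by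
    refine radius_pos_of_norm_le (C := C * a) (a := a) ha fun n => ?_
    calc ‖Q n‖ = ‖c n‖ := ContinuousMultilinearMap.norm_mkPiRing _
      _ ≤ C * a ^ (n + 1) := (norm_c n).trans (norm_p _)
      _ = C * a * a ^ n := by ring
  refine ⟨fun z => P.sum (z - z₀), fun w => f z₀ + w • Q.sum w, ?_, ?_, ?_⟩
  · have P_analytic : AnalyticAt ℝ P.sum (z₀ - z₀) := by
      simpa using (P.hasFPowerSeriesOnBall hP).analyticAt
    exact P_analytic.comp (f := fun z => z - z₀) (by fun_prop)
  · exact analyticAt_const.add (analyticAt_id.smul (Q.hasFPowerSeriesOnBall hQ).analyticAt)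
  · filter_upwards [tendsto_sub_nhds_zero z₀ (Metric.eball_mem_nhds 0 hP),
      tendsto_sub_nhds_zero z₀ (Metric.eball_mem_nhds 0 hp.r_pos),
      tendsto_conj_sub_nhds_zero z₀ (Metric.eball_mem_nhds 0 hQ)] with z hzP hzp hzQ
    have f_sum : HasSum (fun n => p (n + 1) fun _ => z - z₀) (f z - f z₀) := by
      simpa [hp.coeff_zero] using (hasSum_nat_add_iff' 1).2 (hp.hasSum hzp)
    have PQ_sum := ((P.hasSum hzP).const_smul (z - z₀)).add
      ((Q.hasSum hzQ).const_smul (conj (z - z₀)))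
    have : f z - f z₀ = (z - z₀) • P.sum (z - z₀) + conj (z - z₀) • Q.sum (conj (z - z₀)) :=
      f_sum.unique <| PQ_sum.congr_fun fun n => by
        simp [hrc n, P, Q, pow_succ', mul_smul]
    rw [add_left_comm, ← this, add_sub_cancel]

end AnalyticDivision

section Dbar

open Filter Topology ComplexConjugate

variable {f g : ℂ → ℂ} {z z₀ : ℂ}

lemma RealAnalytic.continuous (hf : RealAnalytic f) : Continuous f :=
  continuous_iff_continuousAt.2 fun z => (hf z).continuousAt

lemma RealAnalytic.comp_sub_const (hf : RealAnalytic f) (a : ℂ) :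
    RealAnalytic fun z => f (z - a) := fun z =>
  (hf (z - a)).comp (f := fun z => z - a) (by fun_prop)

lemma dbar2_eventuallyEq (h : f =ᶠ[𝓝 z] g) : Dbar2 f =ᶠ[𝓝 z] Dbar2 g := by
  filter_upwards [h.fderiv (𝕜 := ℝ)] with w hw
  simp only [Dbar2, hw]

lemma analyticAt_dbar2 (hf : AnalyticAt ℝ f z) : AnalyticAt ℝ (Dbar2 f) z := by
  have fderiv_apply (v : ℂ) : AnalyticAt ℝ (fun w => fderiv ℝ f w v) z :=
    ((ContinuousLinearMap.apply ℝ ℂ v).analyticAt _).comp hf.fderiv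
  exact analyticAt_const.mul
    ((fderiv_apply 1).add (analyticAt_const.mul (fderiv_apply I)))

lemma analyticAt_dbar2_iterate (hf : AnalyticAt ℝ f z) (n : ℕ) : AnalyticAt ℝ (Dbar2^[n] f) z :=
  Function.Iterate.rec _ hf (fun _ => analyticAt_dbar2) n

lemma dbar2_add (hf : DifferentiableAt ℝ f z) (hg : DifferentiableAt ℝ g z) :
    Dbar2 (fun w => f w + g w) z = Dbar2 f z + Dbar2 g z := by
  simp only [Dbar2, fderiv_fun_add hf hg, add_apply]
  ring

lemma dbar2_sum {ι : Type*} {f : ι → ℂ → ℂ} {s : Finset ι}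
    (hf : ∀ i ∈ s, DifferentiableAt ℝ (f i) z) :
    Dbar2 (fun w => ∑ i ∈ s, f i w) z = ∑ i ∈ s, Dbar2 (f i) z := by
  simp only [Dbar2, fderiv_fun_sum hf, sum_apply, Finset.mul_sum, mul_add, Finset.sum_add_distrib]

lemma dbar2_mul (hf : DifferentiableAt ℝ f z) (hg : DifferentiableAt ℝ g z) :
    Dbar2 (fun w => f w * g w) z = Dbar2 f z * g z + f z * Dbar2 g z := by
  simp only [Dbar2, fderiv_fun_mul hf hg, add_apply, smul_apply, smul_eq_mul]
  ring

lemma dbar2_comp_sub_const (f : ℂ → ℂ) (a z : ℂ) :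
    Dbar2 (fun w => f (w - a)) z = Dbar2 f (z - a) := by
  simp only [Dbar2, fderiv_comp_sub]

lemma dbar2_holomorphic_comp {φ : ℂ → ℂ} (hφ : DifferentiableAt ℂ φ (f z))
    (hf : DifferentiableAt ℝ f z) :
    Dbar2 (fun w => φ (f w)) z = deriv φ (f z) * Dbar2 f z := by
  have fderiv_eq (v : ℂ) : fderiv ℝ (fun w => φ (f w)) z v = deriv φ (f z) * fderiv ℝ f z v := by
    have comp_hasFDerivAt : HasFDerivAt (fun w => φ (f w)) _ z :=
      (hφ.hasFDerivAt.restrictScalars ℝ).comp z hf.hasFDerivAt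
    rw [comp_hasFDerivAt.fderiv]
    simp [mul_comm]
  simp only [Dbar2, fderiv_eq]
  ring

lemma dbar2_id (z : ℂ) : Dbar2 (fun w => w) z = 0 := by
  simp [Dbar2]

lemma dbar2_conj (z : ℂ) : Dbar2 (fun w => conj w) z = -2 * I := by
  have : fderiv ℝ (fun w : ℂ => conj w) z = conjCLE := conjCLE.fderiv
  simp only [Dbar2, this]
  simp
  ring

lemma dbar2_of_differentiableAt (hf : DifferentiableAt ℂ f z) : Dbar2 f z = 0 := by
  simpa [dbar2_id] using dbar2_holomorphic_comp (f := fun w => w) hf differentiableAt_id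

lemma differentiable_conj_sub (z₀ : ℂ) : Differentiable ℝ fun z => conj (z - z₀) :=
  conjCLE.differentiable.comp (differentiable_id.sub_const z₀)

lemma dbar2_comp_conj_sub {k : ℂ → ℂ} (hk : DifferentiableAt ℂ k (conj (z - z₀))) :
    Dbar2 (fun w => k (conj (w - z₀))) z = -2 * I * deriv k (conj (z - z₀)) := by
  rw [dbar2_holomorphic_comp (f := fun w => conj (w - z₀)) hk (differentiable_conj_sub z₀ z),
    dbar2_comp_sub_const (fun w => conj w), dbar2_conj, mul_comm]

lemma dbar2_holomorphic_mul (hf : DifferentiableAt ℂ f z) (hg : DifferentiableAt ℝ g z) :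
    Dbar2 (fun w => f w * g w) z = f z * Dbar2 g z := by
  rw [dbar2_mul (hf.restrictScalars ℝ) hg, dbar2_of_differentiableAt hf, zero_mul, zero_add]

lemma dbar2_iterate_eventuallyEq {k : ℂ → ℂ} (hg : AnalyticAt ℝ g z₀) (hk : AnalyticAt ℂ k 0)
    (hf : ∀ᶠ z in 𝓝 z₀, f z = (z - z₀) * g z + k (conj (z - z₀))) (n : ℕ) :
    Dbar2^[n] f =ᶠ[𝓝 z₀] fun z =>
      (z - z₀) * Dbar2^[n] g z + (-2 * I) ^ n * iteratedDeriv n k (conj (z - z₀)) := by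
  induction n with
  | zero => simpa [Filter.EventuallyEq] using hf
  | succ n ih =>
    rw [Function.iterate_succ_apply']
    refine (dbar2_eventuallyEq ih).trans ?_
    filter_upwards [(analyticAt_dbar2_iterate hg n).eventually_analyticAt,
      (tendsto_conj_sub_nhds_zero z₀).eventually (hk.iterated_deriv n).eventually_analyticAt]
      with z hgz hkz
    rw [← iteratedDeriv_eq_iterate] at hkz
    have hkz' : DifferentiableAt ℝ (fun w => iteratedDeriv n k (conj (w - z₀))) z :=
      .fun_comp' z (hkz.differentiableAt.restrictScalars ℝ) (differentiable_conj_sub z₀ z)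
    have hz : DifferentiableAt ℂ (fun w => w - z₀) z := by fun_prop
    rw [dbar2_add ((hz.restrictScalars ℝ).fun_mul hgz.differentiableAt)
        ((differentiableAt_const _).fun_mul hkz'),
      dbar2_holomorphic_mul hz hgz.differentiableAt,
      dbar2_holomorphic_mul (differentiableAt_const _) hkz', ← Function.iterate_succ_apply' Dbar2,
      dbar2_comp_conj_sub hkz.differentiableAt, iteratedDeriv_succ, pow_succ]
    ring

lemma exists_eventually_eq_sub_mul (hf : AnalyticAt ℝ f z₀) (h : ∀ n, Dbar2^[n] f z₀ = 0) :
    ∃ g : ℂ → ℂ, AnalyticAt ℝ g z₀ ∧ ∀ᶠ z in 𝓝 z₀, f z = (z - z₀) * g z := by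
  obtain ⟨g, k, hg, hk, hfgk⟩ := exists_eventually_eq_sub_smul_add_comp_conj hf
  have iteratedDeriv_eq_zero (n : ℕ) : iteratedDeriv n k 0 = 0 := by
    simpa [h n] using (dbar2_iterate_eventuallyEq hg hk hfgk n).eq_of_nhds.symm
  have k_eq_zero : ∀ᶠ w in 𝓝 0, k w = 0 := by
    rw [← analyticOrderAt_eq_top, ENat.eq_top_iff_forall_ge]
    exact fun n => (natCast_le_analyticOrderAt_iff_iteratedDeriv_eq_zero hk).2
      fun i _ => iteratedDeriv_eq_zero i
  refine ⟨g, hg, ?_⟩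
  filter_upwards [hfgk, (tendsto_conj_sub_nhds_zero z₀).eventually k_eq_zero] with z hz hkz
  rw [hz, hkz, add_zero, smul_eq_mul]

/-- Every zero of `s` is simple. Theta functions provide such `s`, which serve as denominators. -/
def HasSimpleZeros (s : ℂ → ℂ) : Prop := ∀ z, s z = 0 → deriv s z ≠ 0

lemma HasSimpleZeros.comp_sub_const {s : ℂ → ℂ} (hs : HasSimpleZeros s) (a : ℂ) :
    HasSimpleZeros fun z => s (z - a) := fun z hz => by
  rw [deriv_comp_sub_const]
  exact hs _ hz

lemma HasSimpleZeros.eventually_ne_zero {s : ℂ → ℂ} (hs : HasSimpleZeros s)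
    (hd : Differentiable ℂ s) (z : ℂ) : ∀ᶠ w in 𝓝[≠] z, s w ≠ 0 := by
  by_cases hz : s z = 0
  · exact (hd z).hasDerivAt.eventually_ne (hs z hz)
  · exact (hd.continuous.continuousAt.eventually_ne hz).filter_mono nhdsWithin_le_nhds

lemma HasSimpleZeros.dense_ne_zero {s : ℂ → ℂ} (hs : HasSimpleZeros s)
    (hd : Differentiable ℂ s) : Dense {z | s z ≠ 0} := fun z =>
  mem_closure_iff_frequently.2
    ((hs.eventually_ne_zero hd z).frequently.filter_mono nhdsWithin_le_nhds)

lemma HasSimpleZeros.eq_of_mul_eq_mul {s f g : ℂ → ℂ} (hs : HasSimpleZeros s)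
    (hd : Differentiable ℂ s) (hf : Continuous f) (hg : Continuous g)
    (h : ∀ z, s z * f z = s z * g z) : f = g :=
  hf.ext_on (hs.dense_ne_zero hd) hg fun z hz => mul_left_cancel₀ hz (h z)

lemma HasSimpleZeros.exists_eventually_eq_mul {s u : ℂ → ℂ} (hs : HasSimpleZeros s)
    (hd : Differentiable ℂ s) (hu : AnalyticAt ℝ u z)
    (hz : s z = 0 → ∀ n, Dbar2^[n] u z = 0) :
    ∃ h : ℂ → ℂ, AnalyticAt ℝ h z ∧ ∀ᶠ w in 𝓝 z, u w = s w * h w := by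
  by_cases hsz : s z = 0
  · obtain ⟨g, hg, hug⟩ := exists_eventually_eq_sub_mul hu (hz hsz)
    have slope_differentiable : Differentiable ℂ (dslope s z) := by
      rw [← differentiableOn_univ, Complex.differentiableOn_dslope univ_mem]
      exact hd.differentiableOn
    have slope_ne_zero : dslope s z z ≠ 0 := by rw [dslope_same]; exact hs z hsz
    refine ⟨fun w => g w / dslope s z w,
      hg.div (slope_differentiable.analyticAt z).restrictScalars slope_ne_zero, ?_⟩
    filter_upwards [hug, slope_differentiable.continuous.continuousAt.eventually_ne slope_ne_zero]
      with w hw hne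
    have s_eq : s w = (w - z) * dslope s z w := by
      rw [← smul_eq_mul, sub_smul_dslope, hsz, sub_zero]
    rw [hw, s_eq]
    field_simp
  · refine ⟨fun w => u w / s w, hu.div (hd.analyticAt z).restrictScalars hsz, ?_⟩
    filter_upwards [hd.continuous.continuousAt.eventually_ne hsz] with w hw
    exact (mul_div_cancel₀ _ hw).symm

lemma HasSimpleZeros.exists_realAnalytic_eq_mul {s u : ℂ → ℂ} (hs : HasSimpleZeros s)
    (hd : Differentiable ℂ s) (hu : RealAnalytic u)
    (hz : ∀ z, s z = 0 → ∀ n, Dbar2^[n] u z = 0) :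
    ∃ h : ℂ → ℂ, RealAnalytic h ∧ ∀ z, u z = s z * h z := by
  choose h h_analytic u_eq using fun z => hs.exists_eventually_eq_mul hd (hu z) (hz z)
  refine ⟨fun z => h z z, fun z => (h_analytic z).congr ?_, fun z => (u_eq z).self_of_nhds⟩
  filter_upwards [(u_eq z).eventually_nhds,
    eventually_nhdsWithin_iff.1 (hs.eventually_ne_zero hd z)] with w hw hsw
  obtain rfl | hwz := eq_or_ne w z
  · rfl
  · exact mul_left_cancel₀ (hsw hwz) (hw.self_of_nhds.symm.trans (u_eq w).self_of_nhds)

end Dbar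

section DiracOperator

variable {ι : Type*} [Fintype ι] {A : Matrix ι ι (ℂ → ℂ)} {κ : ℂ} {u : ι → ℂ → ℂ}

/-- The operator `D + κ` with `D u = 2D_{z̄} u + A u` acting on `ι`-tuples of functions, for a
matrix potential `A`. The chiral Dirac operator `D(α)` is the case `A = !![0, αU(z); αU(-z), 0]`. -/
def diracOp (A : Matrix ι ι (ℂ → ℂ)) (κ : ℂ) (u : ι → ℂ → ℂ) (i : ι) (z : ℂ) : ℂ :=
  Dbar2 (u i) z + ∑ j, A i j z * u j z + κ * u i z

lemma diracOp_mul {s : ℂ → ℂ} {k z : ℂ} {i : ι} (hs : DifferentiableAt ℝ s z)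
    (hk : Dbar2 s z = -k * s z) (hu : DifferentiableAt ℝ (u i) z) :
    diracOp A (κ + k) (fun j w => s w * u j w) i z = s z * diracOp A κ u i z := by
  simp only [diracOp, dbar2_mul hs hu, hk, mul_left_comm _ (s z), ← Finset.mul_sum]
  ring

lemma dbar2_sum_mul_eq_of_diracOp_eq_zero {a : ι → ℂ → ℂ} {z : ℂ}
    (ha : ∀ i, DifferentiableAt ℝ (a i) z) (hu : ∀ i, DifferentiableAt ℝ (u i) z)
    (hD : ∀ i, diracOp A κ u i z = 0) :
    Dbar2 (fun w => ∑ i, a i w * u i w) z =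
      ∑ j, (Dbar2 (a j) z - κ * a j z - ∑ i, a i z * A i j z) * u j z := by
  have dbar2_u (i : ι) : Dbar2 (u i) z = -∑ j, A i j z * u j z - κ * u i z := by
    have := hD i
    rw [diracOp] at this
    linear_combination this
  calc Dbar2 (fun w => ∑ i, a i w * u i w) z
      = ∑ i, (Dbar2 (a i) z * u i z - κ * a i z * u i z - ∑ j, a i z * A i j z * u j z) := by
        rw [dbar2_sum fun i _ => (ha i).fun_mul (hu i)]
        refine Finset.sum_congr rfl fun i _ => ?_
        simp only [dbar2_mul (ha i) (hu i), dbar2_u, mul_assoc, ← Finset.mul_sum]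
        ring
    _ = ∑ j, (Dbar2 (a j) z - κ * a j z - ∑ i, a i z * A i j z) * u j z := by
        simp only [sub_mul, Finset.sum_sub_distrib, Finset.sum_mul]
        rw [Finset.sum_comm]

lemma dbar2_iterate_sum_mul_eq_zero (hA : ∀ i j, RealAnalytic (A i j))
    (hu : ∀ i, RealAnalytic (u i)) (hD : ∀ i z, diracOp A κ u i z = 0) {z₀ : ℂ}
    (hz₀ : ∀ i, u i z₀ = 0) {a : ι → ℂ → ℂ} (ha : ∀ i, RealAnalytic (a i)) (n : ℕ) :
    Dbar2^[n] (fun z => ∑ i, a i z * u i z) z₀ = 0 := by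
  induction n generalizing a with
  | zero => simp [hz₀]
  | succ n ih =>
    have dbar2_eq : Dbar2 (fun w => ∑ i, a i w * u i w) = fun z =>
        ∑ j, (Dbar2 (a j) z - κ * a j z - ∑ i, a i z * A i j z) * u j z := funext fun z =>
      dbar2_sum_mul_eq_of_diracOp_eq_zero (fun i => (ha i z).differentiableAt)
        (fun i => (hu i z).differentiableAt) fun i => hD i z
    rw [Function.iterate_succ_apply, dbar2_eq]
    refine ih (a := fun j z => Dbar2 (a j) z - κ * a j z - ∑ i, a i z * A i j z) fun j z => ?_
    exact ((analyticAt_dbar2 (ha j z)).sub (analyticAt_const.mul (ha j z))).sub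
      (Finset.univ.analyticAt_fun_sum fun i _ => (ha i z).mul (hA i j z))

lemma dbar2_iterate_eq_zero (hA : ∀ i j, RealAnalytic (A i j)) (hu : ∀ i, RealAnalytic (u i))
    (hD : ∀ i z, diracOp A κ u i z = 0) {z₀ : ℂ} (hz₀ : ∀ i, u i z₀ = 0) (n : ℕ) (i : ι) :
    Dbar2^[n] (u i) z₀ = 0 := by
  classical
  simpa [Pi.single_apply, Finset.sum_ite_eq', apply_ite, ite_apply] using
    dbar2_iterate_sum_mul_eq_zero hA hu hD hz₀ (a := fun j _ => if i = j then 1 else 0)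
      (fun _ _ => analyticAt_const) n

end DiracOperator

section Theta

open Filter Topology Real

lemma omega_im : ω.im = √3 / 2 := by
  have : (2 * (π : ℂ) * I / 3) = ((2 * π / 3 : ℝ) : ℂ) * I := by push_cast; ring
  rw [ω, this, exp_ofReal_mul_I_im, show 2 * π / 3 = π - π / 3 by ring, Real.sin_pi_sub,
    Real.sin_pi_div_three]

lemma omega_im_pos : 0 < ω.im := by
  rw [omega_im]
  positivity

/-- The summand of index `n` in the series of `-θ z`. -/
def θTerm (z : ℂ) (n : ℤ) : ℂ :=
  cexp (π * I * ((n : ℂ) + 1 / 2) ^ 2 * ω + 2 * π * I * ((n : ℂ) + 1 / 2) * (z + 1 / 2))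

lemma θTerm_eq_mul_jacobiTheta₂_term (z : ℂ) (n : ℤ) :
    θTerm z n = cexp (π * I * (ω / 4 + z + 1 / 2)) * jacobiTheta₂_term n (z + 1 / 2 + ω / 2) ω := by
  rw [θTerm, jacobiTheta₂_term, ← Complex.exp_add]
  ring_nf

lemma hasSum_θTerm (z : ℂ) : HasSum (θTerm z) (-θ z) := by
  rw [θ, neg_neg]
  refine Summable.hasSum (f := θTerm z) ?_
  rw [funext (θTerm_eq_mul_jacobiTheta₂_term z)]
  exact ((summable_jacobiTheta₂_term_iff _ _).2 omega_im_pos).mul_left _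

lemma θ_eq_mul_jacobiTheta₂ (z : ℂ) :
    θ z = -(cexp (π * I * (ω / 4 + z + 1 / 2)) * jacobiTheta₂ (z + 1 / 2 + ω / 2) ω) := by
  rw [jacobiTheta₂, ← tsum_mul_left, ← funext (θTerm_eq_mul_jacobiTheta₂_term z),
    (hasSum_θTerm z).tsum_eq, neg_neg]

lemma differentiable_θ : Differentiable ℂ θ := by
  rw [funext θ_eq_mul_jacobiTheta₂]
  intro z
  have jacobi : DifferentiableAt ℂ (fun z => jacobiTheta₂ (z + 1 / 2 + ω / 2) ω) z :=
    (differentiableAt_jacobiTheta₂_fst _ omega_im_pos).fun_comp' z (by fun_prop)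
  fun_prop

lemma θTerm_add_lattice (z : ℂ) (m n l : ℤ) :
    θTerm (z + (m * ω + n)) l =
      cexp (π * I * (n - m - 2 * m * z - m ^ 2 * ω)) * θTerm z (l + m) := by
  rw [θTerm, θTerm, ← Complex.exp_add, Complex.exp_eq_exp_iff_exists_int]
  refine ⟨l * n, ?_⟩
  push_cast
  ring

lemma θ_add_lattice (z : ℂ) (m n : ℤ) :
    θ (z + (m * ω + n)) = cexp (π * I * (n - m - 2 * m * z - m ^ 2 * ω)) * θ z := by
  have shifted := ((Equiv.addRight m).hasSum_iff.2 (hasSum_θTerm z)).mul_left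
    (cexp (π * I * (n - m - 2 * m * z - m ^ 2 * ω)))
  have := (hasSum_θTerm _).unique (shifted.congr_fun fun l => θTerm_add_lattice z m n l)
  linear_combination -this

/-- The term of index `n` in the sine series of `θ z`: the indices `n` and `-(n + 1)` of the
exponential series taken together. -/
def θSinTerm (z : ℂ) (n : ℕ) : ℂ :=
  2 * cexp (π * I * ((n : ℂ) + 1 / 2) ^ 2 * ω) * (-1) ^ n * Complex.sin ((2 * n + 1) * (π * z))

lemma θTerm_add_θTerm_neg_add_one (z : ℂ) (n : ℕ) :
    θTerm z n + θTerm z (-(n + 1)) = -θSinTerm z n := by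
  set x := (2 * n + 1) * (π * z) + π / 2 with hx
  have term_eq : θTerm z n =
      cexp (π * I * ((n : ℂ) + 1 / 2) ^ 2 * ω) * cexp ((x + n * π) * I) := by
    rw [θTerm, ← Complex.exp_add, hx]
    push_cast
    ring_nf
  have neg_term_eq : θTerm z (-(n + 1)) =
      cexp (π * I * ((n : ℂ) + 1 / 2) ^ 2 * ω) * cexp (-(x + n * π) * I) := by
    rw [θTerm, ← Complex.exp_add, hx]
    push_cast
    ring_nf
  have cos_eq : Complex.cos (x + n * π) =
      -((-1) ^ n * Complex.sin ((2 * n + 1) * (π * z))) := by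
    rw [Complex.cos_antiperiodic.add_nat_mul_eq n, hx, Complex.cos_add_pi_div_two]
    ring
  rw [θSinTerm, term_eq, neg_term_eq, ← mul_add, ← Complex.two_cos, cos_eq]
  ring

lemma hasSum_θSinTerm (z : ℂ) : HasSum (θSinTerm z) (θ z) := by
  simpa only [θTerm_add_θTerm_neg_add_one, neg_neg] using
    (hasSum_θTerm z).nat_add_neg_add_one.neg

lemma norm_cexp_mul_I_le (w : ℂ) : ‖cexp (w * I)‖ ≤ rexp |w.im| := by
  rw [Complex.norm_exp, Complex.mul_I_re]
  exact Real.exp_le_exp.2 (neg_le_abs _)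

lemma norm_cos_le (w : ℂ) : ‖Complex.cos w‖ ≤ rexp |w.im| := by
  have exp_neg_le : ‖cexp (-w * I)‖ ≤ rexp |w.im| := by simpa using norm_cexp_mul_I_le (-w)
  rw [Complex.cos, norm_div, Complex.norm_two, div_le_iff₀ two_pos]
  linarith [norm_cexp_mul_I_le w, norm_add_le (cexp (w * I)) (cexp (-w * I))]

lemma norm_sin_odd_mul_le (w : ℂ) (n : ℕ) :
    ‖Complex.sin ((2 * n + 1) * w)‖ ≤ (2 * n + 1) * rexp (2 * n * |w.im|) * ‖Complex.sin w‖ := by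
  induction n with
  | zero => simp
  | succ n ih =>
    have sin_eq : Complex.sin ((2 * (n + 1 : ℕ) + 1) * w) =
        Complex.sin ((2 * n + 1) * w) +
          2 * (Complex.sin w * Complex.cos ((2 * (n + 1 : ℕ)) * w)) := by
      rw [← sub_eq_iff_eq_add', Complex.sin_sub_sin]
      push_cast
      ring_nf
    have cos_le : ‖Complex.cos ((2 * (n + 1 : ℕ)) * w)‖ ≤ rexp (2 * (n + 1 : ℕ) * |w.im|) := by
      convert norm_cos_le ((2 * (n + 1 : ℕ)) * w) using 2
      have : ((2 * (n + 1 : ℕ)) * w).im = (2 * (n + 1 : ℕ) : ℝ) * w.im := by simp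
      rw [this, abs_mul, abs_of_nonneg (by positivity : (0 : ℝ) ≤ 2 * (n + 1 : ℕ))]
    have exp_le : rexp (2 * n * |w.im|) ≤ rexp (2 * (n + 1 : ℕ) * |w.im|) := by
      gcongr
      exact n.le_succ
    calc ‖Complex.sin ((2 * (n + 1 : ℕ) + 1) * w)‖
        ≤ ‖Complex.sin ((2 * n + 1) * w)‖ +
            2 * (‖Complex.sin w‖ * ‖Complex.cos ((2 * (n + 1 : ℕ)) * w)‖) := by
          rw [sin_eq]
          exact (norm_add_le _ _).trans_eq (by simp)
      _ ≤ (2 * n + 1) * rexp (2 * (n + 1 : ℕ) * |w.im|) * ‖Complex.sin w‖ +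
            2 * (‖Complex.sin w‖ * rexp (2 * (n + 1 : ℕ) * |w.im|)) := by
          gcongr
          exact ih.trans (by gcongr)
      _ = (2 * (n + 1 : ℕ) + 1) * rexp (2 * (n + 1 : ℕ) * |w.im|) * ‖Complex.sin w‖ := by
          push_cast
          ring

lemma exp_neg_pi_mul_sqrt_three_div_two_le : rexp (-(π * (√3 / 2))) ≤ 1 / 8 := by
  have sqrt_ge : (1.7 : ℝ) ≤ √3 := Real.le_sqrt_of_sq_le (by norm_num)
  have exponent_ge : (2.5 : ℝ) ≤ π * (√3 / 2) := by nlinarith [Real.pi_gt_three]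
  have exp_ge : (8 : ℝ) ≤ rexp (π * (√3 / 2)) :=
    calc (8 : ℝ) ≤ (1 / 4 + 1) ^ 10 := by norm_num
      _ ≤ rexp (1 / 4) ^ 10 := by gcongr; exact Real.add_one_le_exp _
      _ = rexp 2.5 := by rw [← Real.exp_nat_mul]; norm_num
      _ ≤ rexp (π * (√3 / 2)) := Real.exp_le_exp.2 exponent_ge
  rw [Real.exp_neg, one_div]
  exact inv_anti₀ (by norm_num) exp_ge

lemma norm_gaussian (n : ℕ) :
    ‖cexp (π * I * ((n : ℂ) + 1 / 2) ^ 2 * ω)‖ = rexp (-(π * (√3 / 2) * (n + 1 / 2) ^ 2)) := by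
  have : π * I * ((n : ℂ) + 1 / 2) ^ 2 * ω = ((π * ((n : ℝ) + 1 / 2) ^ 2 : ℝ) : ℂ) * (I * ω) := by
    push_cast
    ring
  rw [Complex.norm_exp, this, re_ofReal_mul, I_mul_re, omega_im]
  ring_nf

lemma norm_gaussian_mul_exp_le {y : ℝ} (hy : |y| ≤ √3 / 4) (n : ℕ) :
    ‖cexp (π * I * ((n : ℂ) + 1 / 2) ^ 2 * ω)‖ * rexp (2 * n * (π * |y|)) ≤
      rexp (-(π * √3 / 8)) * (1 / 8) ^ n := by
  have le_sq : (n : ℝ) ≤ n ^ 2 := mod_cast Nat.le_self_pow two_ne_zero n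
  calc _ = rexp (-(π * (√3 / 2) * (n + 1 / 2) ^ 2) + 2 * n * (π * |y|)) := by
        rw [norm_gaussian, ← Real.exp_add]
    _ ≤ rexp (-(π * √3 / 8) + n * -(π * (√3 / 2))) := by
        have : 2 * n * (π * |y|) ≤ 2 * n * (π * (√3 / 4)) := by gcongr
        have : π * (√3 / 2) * n ≤ π * (√3 / 2) * n ^ 2 := by gcongr
        rw [Real.exp_le_exp]
        linarith
    _ = rexp (-(π * √3 / 8)) * rexp (-(π * (√3 / 2))) ^ n := by
        rw [Real.exp_add, Real.exp_nat_mul]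
    _ ≤ rexp (-(π * √3 / 8)) * (1 / 8) ^ n := by
        gcongr
        exact exp_neg_pi_mul_sqrt_three_div_two_le

lemma norm_θSinTerm_le {z : ℂ} (hz : |z.im| ≤ √3 / 4) (n : ℕ) :
    ‖θSinTerm z n‖ ≤ 2 * rexp (-(π * √3 / 8)) * ‖Complex.sin (π * z)‖ * (3 / 8) ^ n := by
  have sin_le := norm_sin_odd_mul_le (π * z) n
  rw [im_ofReal_mul, abs_mul, abs_of_pos Real.pi_pos] at sin_le
  have odd_le : (2 * n + 1 : ℝ) ≤ 3 ^ n := by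
    have := one_add_mul_le_pow (by norm_num : (-2 : ℝ) ≤ 2) n
    norm_num at this ⊢
    linarith
  let q := cexp (π * I * ((n : ℂ) + 1 / 2) ^ 2 * ω)
  calc _ = 2 * ‖q‖ * ‖Complex.sin ((2 * n + 1) * (π * z))‖ := by
        simp [θSinTerm, q]
    _ ≤ 2 * ‖q‖ * (3 ^ n * rexp (2 * n * (π * |z.im|)) * ‖Complex.sin (π * z)‖) := by
        gcongr
        exact sin_le.trans (by gcongr)
    _ = 2 * ‖Complex.sin (π * z)‖ * 3 ^ n * (‖q‖ * rexp (2 * n * (π * |z.im|))) := by ring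
    _ ≤ 2 * ‖Complex.sin (π * z)‖ * 3 ^ n * (rexp (-(π * √3 / 8)) * (1 / 8) ^ n) :=
        mul_le_mul_of_nonneg_left (norm_gaussian_mul_exp_le hz n) (by positivity)
    _ = 2 * rexp (-(π * √3 / 8)) * ‖Complex.sin (π * z)‖ * (3 / 8) ^ n := by
        rw [show (3 / 8 : ℝ) = 3 * (1 / 8) by norm_num, mul_pow]
        ring

-- The first term of the sine series outweighs the sum of all others.
lemma mul_norm_sin_le_norm_θ {z : ℂ} (hz : |z.im| ≤ √3 / 4) :
    4 / 5 * rexp (-(π * √3 / 8)) * ‖Complex.sin (π * z)‖ ≤ ‖θ z‖ := by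
  set M := 2 * rexp (-(π * √3 / 8)) * ‖Complex.sin (π * z)‖ with hM
  have norm_first : ‖θSinTerm z 0‖ = M := by
    have exponent_eq : π * (√3 / 2) * ((0 : ℕ) + 1 / 2) ^ 2 = π * √3 / 8 := by
      push_cast
      ring
    rw [θSinTerm, norm_mul, norm_mul, norm_mul, norm_gaussian, exponent_eq]
    simp [hM]
  have tail : HasSum (fun n => θSinTerm z (n + 1)) (θ z - θSinTerm z 0) := by
    simpa only [Finset.sum_range_one] using (hasSum_nat_add_iff' 1).2 (hasSum_θSinTerm z)
  have geometric : HasSum (fun n => M * (3 / 8 : ℝ) ^ (n + 1)) (M * (3 / 5)) := by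
    have ratio_lt : (3 / 8 : ℝ) < 1 := by norm_num
    have sum_eq : M * (3 / 5) = M * (3 / 8) * (1 - 3 / 8)⁻¹ := by
      norm_num
      ring
    rw [sum_eq]
    exact ((hasSum_geometric_of_lt_one (by norm_num) ratio_lt).mul_left _).congr_fun
      fun n => by ring
  have tail_le := tail.norm_le_of_bounded geometric fun n => norm_θSinTerm_le hz (n + 1)
  have := norm_sub_norm_le (θSinTerm z 0) (θ z)
  rw [norm_sub_rev, norm_first] at this
  linarith

lemma sin_eq_zero_of_θ_eq_zero {z : ℂ} (hz : |z.im| ≤ √3 / 4) (h : θ z = 0) :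
    Complex.sin (π * z) = 0 := by
  have := mul_norm_sin_le_norm_θ hz
  rw [h, norm_zero] at this
  exact norm_le_zero_iff.1 (nonpos_of_mul_nonpos_right this (by positivity))

lemma θ_zero : θ 0 = 0 := by
  have terms_eq_zero : θSinTerm 0 = 0 := by
    ext n
    simp [θSinTerm]
  exact (hasSum_θSinTerm 0).unique (terms_eq_zero ▸ hasSum_zero)

lemma θ_eq_zero_iff {z : ℂ} : θ z = 0 ↔ inΛ z := by
  constructor
  · intro hz
    let m : ℤ := round (z.im / (√3 / 2))
    have im_eq : (z + ((-m : ℤ) * ω + (0 : ℤ))).im = (z.im / (√3 / 2) - m) * (√3 / 2) := by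
      simp [omega_im]
      field_simp
      ring
    have im_le : |(z + ((-m : ℤ) * ω + (0 : ℤ))).im| ≤ √3 / 4 := by
      rw [im_eq, abs_mul, abs_of_pos (by positivity : 0 < √3 / 2)]
      have : |z.im / (√3 / 2) - m| ≤ 1 / 2 := abs_sub_round _
      nlinarith [Real.sqrt_nonneg 3]
    have sin_eq := sin_eq_zero_of_θ_eq_zero im_le (by rw [θ_add_lattice, hz, mul_zero])
    obtain ⟨n, hn⟩ := Complex.sin_eq_zero_iff.1 sin_eq
    rw [mul_comm, mul_left_inj' (ofReal_ne_zero.2 Real.pi_ne_zero)] at hn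
    refine ⟨m, n, ?_⟩
    push_cast at hn
    linear_combination hn
  · rintro ⟨m, n, rfl⟩
    rw [← zero_add (m * ω + n : ℂ), θ_add_lattice, θ_zero, mul_zero]

lemma isBigO_sin_θ : (fun z : ℂ => Complex.sin (π * z)) =O[𝓝 0] θ := by
  have im_lt : ∀ᶠ z : ℂ in 𝓝 0, |z.im| < √3 / 4 :=
    (by fun_prop : Continuous fun z : ℂ => |z.im|).continuousAt.eventually_lt continuousAt_const
      (by simp)
  refine Asymptotics.IsBigO.of_bound (4 / 5 * rexp (-(π * √3 / 8)))⁻¹ ?_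
  filter_upwards [im_lt] with z hz
  rw [← div_eq_inv_mul, le_div_iff₀' (by positivity)]
  exact mul_norm_sin_le_norm_θ hz.le

lemma deriv_θ_zero_ne_zero : deriv θ 0 ≠ 0 := by
  intro deriv_eq
  have θ_isLittleO := (differentiable_θ 0).hasDerivAt.isLittleO
  simp only [deriv_eq, θ_zero, smul_zero, sub_zero] at θ_isLittleO
  have sin_deriv_zero : HasDerivAt (fun z : ℂ => Complex.sin (π * z)) 0 0 :=
    .of_isLittleO (by simpa using isBigO_sin_θ.trans_isLittleO θ_isLittleO)
  have sin_deriv_pi : HasDerivAt (fun z : ℂ => Complex.sin (π * z)) π 0 := by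
    simpa using ((hasDerivAt_id (0 : ℂ)).const_mul (π : ℂ)).csin
  exact Real.pi_ne_zero (ofReal_eq_zero.1 (sin_deriv_pi.unique sin_deriv_zero))

lemma hasSimpleZeros_θ : HasSimpleZeros θ := by
  intro z hz
  obtain ⟨m, n, rfl⟩ := θ_eq_zero_iff.1 hz
  let e (w : ℂ) : ℂ := cexp (π * I * (n - m - 2 * m * w - m ^ 2 * ω))
  have e_differentiable : DifferentiableAt ℂ e 0 := by fun_prop
  calc deriv θ (m * ω + n) = deriv (fun w => θ (w + (m * ω + n))) 0 := by
        rw [deriv_comp_add_const, zero_add]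
    _ = deriv (fun w => e w * θ w) 0 := by simp only [θ_add_lattice, e]
    _ = e 0 * deriv θ 0 := by
        rw [deriv_fun_mul e_differentiable (differentiable_θ 0), θ_zero, mul_zero, zero_add]
    _ ≠ 0 := mul_ne_zero (Complex.exp_ne_zero _) deriv_θ_zero_ne_zero

end Theta

section BlochMultiplier

open ComplexConjugate Real

/-- The numerator `e^{(i/2)(z - z̄)k} θ(z - z(k))` of `F_k`. -/
def blochNumerator (k z : ℂ) : ℂ := cexp (I / 2 * (z - conj z) * k) * θ (z - zmap k)

lemma F_eq_div (k z : ℂ) : F k z = blochNumerator k z / θ z := rfl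

lemma realAnalytic_blochNumerator (k : ℂ) : RealAnalytic (blochNumerator k) := fun z => by
  have exponent : AnalyticAt ℝ (fun z : ℂ => I / 2 * (z - conj z) * k) z :=
    (analyticAt_const.mul (analyticAt_id.sub (conjCLE.analyticAt z))).mul analyticAt_const
  have theta : RealAnalytic θ := fun z => (differentiable_θ.analyticAt z).restrictScalars
  exact (analyticAt_cexp.restrictScalars.comp exponent).mul
    (theta.comp_sub_const (zmap k) z)

lemma dbar2_sub_conj (z : ℂ) : Dbar2 (fun w => w - conj w) z = 2 * I := by
  have fderiv_eq : fderiv ℝ (fun w : ℂ => w - conj w) z =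
      ContinuousLinearMap.id ℝ ℂ - (conjCLE : ℂ →L[ℝ] ℂ) :=
    ((hasFDerivAt_id z).sub conjCLE.hasFDerivAt).fderiv
  simp only [Dbar2, fderiv_eq]
  simp
  linear_combination -2 * I * I_sq

lemma dbar2_blochNumerator (k z : ℂ) :
    Dbar2 (blochNumerator k) z = -k * blochNumerator k z := by
  have exp_deriv (x : ℂ) :
      HasDerivAt (fun x => cexp (I / 2 * x * k)) (cexp (I / 2 * x * k) * (I / 2 * k)) x := by
    simpa using (((hasDerivAt_id x).const_mul (I / 2)).mul_const k).cexp
  have sub_conj_differentiable : DifferentiableAt ℝ (fun w : ℂ => w - conj w) z :=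
    differentiableAt_id.fun_sub conjCLE.differentiableAt
  have theta_differentiable : DifferentiableAt ℂ (fun w => θ (w - zmap k)) z :=
    (differentiable_θ _).fun_comp' z (by fun_prop)
  have exp_differentiable : DifferentiableAt ℝ (fun w => cexp (I / 2 * (w - conj w) * k)) z :=
    ((exp_deriv _).differentiableAt.restrictScalars ℝ).fun_comp' z sub_conj_differentiable
  have swap : blochNumerator k = fun w => θ (w - zmap k) * cexp (I / 2 * (w - conj w) * k) :=
    funext fun w => mul_comm _ _
  calc Dbar2 (blochNumerator k) z
      = θ (z - zmap k) * Dbar2 (fun w => cexp (I / 2 * (w - conj w) * k)) z := by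
        rw [swap, dbar2_holomorphic_mul theta_differentiable exp_differentiable]
    _ = θ (z - zmap k) * (cexp (I / 2 * (z - conj z) * k) * (I / 2 * k) * (2 * I)) := by
        rw [dbar2_holomorphic_comp (f := fun w => w - conj w) (exp_deriv _).differentiableAt
          sub_conj_differentiable, (exp_deriv _).deriv, dbar2_sub_conj]
    _ = -k * blochNumerator k z := by
        rw [blochNumerator]
        linear_combination (θ (z - zmap k) * cexp (I / 2 * (z - conj z) * k) * k) * I_sq

lemma blochNumerator_add_lattice (k z : ℂ) (m n : ℤ) :
    blochNumerator k (z + (m * ω + n)) =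
      cexp (π * I * (n - m - 2 * m * z - m ^ 2 * ω)) * blochNumerator k z := by
  have im_add : z + (m * ω + n) - conj (z + (m * ω + n)) = z - conj z + m * √3 * I := by
    apply Complex.ext
    · simp
    · simp [omega_im]
      ring
  rw [blochNumerator, blochNumerator, im_add, add_sub_right_comm, θ_add_lattice, ← mul_assoc,
    ← mul_assoc, ← Complex.exp_add, ← Complex.exp_add, zmap]
  congr 2
  field_simp
  linear_combination (4 * m * √3 * k : ℂ) * I_sq

end BlochMultiplier

section BlochMode

open Real

variable {z₀ : ℂ}

lemma differentiable_θ_comp_sub_const (a : ℂ) : Differentiable ℂ fun z => θ (z - a) :=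
  differentiable_θ.comp (differentiable_id.sub_const a)

lemma eq_of_θ_mul_eq_θ_mul {f g : ℂ → ℂ} (hf : Continuous f) (hg : Continuous g)
    (h : ∀ z, θ (z - z₀) * f z = θ (z - z₀) * g z) : f = g :=
  (hasSimpleZeros_θ.comp_sub_const z₀).eq_of_mul_eq_mul (differentiable_θ_comp_sub_const z₀) hf hg h

lemma blochNumerator_mul_floquet {u h : ℂ → ℂ} {c γ : ℂ} (k : ℂ) (hh : Continuous h)
    (huh : ∀ z, u z = θ (z - z₀) * h z) (hγ : inΛ γ) (hc : ∀ z, u (z + γ) = c * u z) (z : ℂ) :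
    blochNumerator k (z + γ - z₀) * h (z + γ) = c * (blochNumerator k (z - z₀) * h z) := by
  obtain ⟨m, n, rfl⟩ := hγ
  let e (z : ℂ) : ℂ := cexp (π * I * (n - m - 2 * m * (z - z₀) - m ^ 2 * ω))
  have h_floquet : (fun z => e z * h (z + (m * ω + n))) = fun z => c * h z := by
    refine eq_of_θ_mul_eq_θ_mul (z₀ := z₀) (by fun_prop) (by fun_prop) fun z => ?_
    have := hc z
    rw [huh, huh, add_sub_right_comm, θ_add_lattice] at this
    linear_combination this
  rw [add_sub_right_comm, blochNumerator_add_lattice]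
  linear_combination blochNumerator k (z - z₀) * congr_fun h_floquet z

lemma eq_zero_of_blochNumerator_mul_eq_zero {h : ℂ → ℂ} {k : ℂ} (hh : Continuous h)
    (hN : ∀ z, blochNumerator k (z - z₀) * h z = 0) : h = 0 := by
  refine eq_of_θ_mul_eq_θ_mul (z₀ := z₀ + zmap k) hh continuous_zero fun z => ?_
  have := hN z
  rw [blochNumerator, mul_assoc, mul_eq_zero_iff_left (Complex.exp_ne_zero _), sub_sub] at this
  rw [this, Pi.zero_apply, mul_zero]

variable {ι : Type*} [Fintype ι] {A : Matrix ι ι (ℂ → ℂ)} {κ : ℂ} {u : ι → ℂ → ℂ}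

lemma continuous_diracOp (hA : ∀ i j, RealAnalytic (A i j)) (hu : ∀ i, RealAnalytic (u i))
    (i : ι) : Continuous (diracOp A κ u i) := by
  have dbar2_continuous : Continuous (Dbar2 (u i)) :=
    RealAnalytic.continuous fun z => analyticAt_dbar2 (hu i z)
  exact (dbar2_continuous.add (continuous_finsetSum _ fun j _ =>
    (hA i j).continuous.mul (hu j).continuous)).add (continuous_const.mul (hu i).continuous)

lemma exists_eq_θ_mul (hA : ∀ i j, RealAnalytic (A i j)) (hu : ∀ i, RealAnalytic (u i))
    (hD : ∀ i z, diracOp A κ u i z = 0) (hz₀ : ∀ z, inΛ (z - z₀) → ∀ i, u i z = 0) :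
    ∃ h : ι → ℂ → ℂ, (∀ i, RealAnalytic (h i)) ∧ (∀ i z, u i z = θ (z - z₀) * h i z) ∧
      ∀ i z, diracOp A κ h i z = 0 := by
  have quotient (i : ι) : ∃ h : ℂ → ℂ, RealAnalytic h ∧ ∀ z, u i z = θ (z - z₀) * h z :=
    (hasSimpleZeros_θ.comp_sub_const z₀).exists_realAnalytic_eq_mul
      (differentiable_θ_comp_sub_const z₀) (hu i) fun z hz n =>
        dbar2_iterate_eq_zero hA hu hD (hz₀ z (θ_eq_zero_iff.1 hz)) n i
  choose h h_analytic u_eq using quotient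
  refine ⟨h, h_analytic, u_eq, fun i => congr_fun ?_⟩
  refine eq_of_θ_mul_eq_θ_mul (z₀ := z₀) (continuous_diracOp hA h_analytic i) continuous_zero
    fun z => ?_
  have θ_differentiable := differentiable_θ_comp_sub_const z₀ z
  have u_eq' : u = fun j w => θ (w - z₀) * h j w := by
    ext j w
    exact u_eq j w
  have θ_dbar2 : Dbar2 (fun w => θ (w - z₀)) z = -0 * θ (z - z₀) := by
    rw [dbar2_of_differentiableAt θ_differentiable, neg_zero, zero_mul]
  calc θ (z - z₀) * diracOp A κ h i z = diracOp A κ u i z := by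
        rw [u_eq', ← diracOp_mul (θ_differentiable.restrictScalars ℝ) θ_dbar2
          (h_analytic i z).differentiableAt, add_zero]
    _ = θ (z - z₀) * 0 := by rw [hD, mul_zero]

theorem exists_bloch_mode_of_eq_zero (hA : ∀ i j, RealAnalytic (A i j))
    (hu : ∀ i, RealAnalytic (u i)) (hD : ∀ i z, diracOp A κ u i z = 0) {c : ι → ℂ → ℂ}
    (hc : ∀ i γ, inΛ γ → ∀ z, u i (z + γ) = c i γ * u i z) (hz₀ : ∀ i, u i z₀ = 0) (k : ℂ) :
    ∃ v : ι → ℂ → ℂ, (∀ i, RealAnalytic (v i)) ∧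
      (∀ i z, ¬ inΛ (z - z₀) → v i z = F k (z - z₀) * u i z) ∧
      (∀ i z, diracOp A (κ + k) v i z = 0) ∧
      (∀ i γ, inΛ γ → ∀ z, v i (z + γ) = c i γ * v i z) ∧
      ∀ i, (∀ z, v i z = 0) → ∀ z, u i z = 0 := by
  have u_eq_zero (z : ℂ) (hz : inΛ (z - z₀)) (i : ι) : u i z = 0 := by
    rw [← add_sub_cancel z₀ z, hc i _ hz, hz₀, mul_zero]
  obtain ⟨h, h_analytic, u_eq, h_dirac⟩ := exists_eq_θ_mul hA hu hD u_eq_zero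
  have N_analytic := (realAnalytic_blochNumerator k).comp_sub_const z₀
  refine ⟨fun i z => blochNumerator k (z - z₀) * h i z, fun i z => (N_analytic z).mul
    (h_analytic i z), fun i z hz => ?_, fun i z => ?_, fun i γ hγ => ?_, fun i hv z => ?_⟩
  · rw [F_eq_div, u_eq, ← mul_assoc, div_mul_cancel₀ _ (mt θ_eq_zero_iff.1 hz)]
  · rw [diracOp_mul (N_analytic z).differentiableAt
      ((dbar2_comp_sub_const _ _ _).trans (dbar2_blochNumerator _ _))
      (h_analytic i z).differentiableAt, h_dirac, mul_zero]
  · exact blochNumerator_mul_floquet k (h_analytic i).continuous (u_eq i) hγ (hc i γ hγ)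
  · rw [u_eq, eq_zero_of_blochNumerator_mul_eq_zero (h_analytic i).continuous hv, Pi.zero_apply,
      mul_zero]

end BlochMode

theorem stmt6_general {V W : ℂ → ℂ} (hV : RealAnalytic V) (hW : RealAnalytic W) {κ : ℂ}
    {u₁ u₂ : ℂ → ℂ} (hu₁ : RealAnalytic u₁) (hu₂ : RealAnalytic u₂)
    (heq₁ : ∀ z, Dbar2 u₁ z + V z * u₂ z + κ * u₁ z = 0)
    (heq₂ : ∀ z, W z * u₁ z + Dbar2 u₂ z + κ * u₂ z = 0) {c₁ c₂ : ℂ → ℂ}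
    (hc₁ : ∀ γ, inΛ γ → ∀ z, u₁ (z + γ) = c₁ γ * u₁ z)
    (hc₂ : ∀ γ, inΛ γ → ∀ z, u₂ (z + γ) = c₂ γ * u₂ z)
    {z₀ : ℂ} (hz₀ : u₁ z₀ = 0 ∧ u₂ z₀ = 0) (k : ℂ) :
    ∃ v₁ v₂ : ℂ → ℂ, RealAnalytic v₁ ∧ RealAnalytic v₂ ∧
      (∀ z, ¬ inΛ (z - z₀) → v₁ z = F k (z - z₀) * u₁ z ∧ v₂ z = F k (z - z₀) * u₂ z) ∧
      (∀ z, Dbar2 v₁ z + V z * v₂ z + (κ + k) * v₁ z = 0) ∧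
      (∀ z, W z * v₁ z + Dbar2 v₂ z + (κ + k) * v₂ z = 0) ∧
      (∀ γ, inΛ γ → ∀ z, v₁ (z + γ) = c₁ γ * v₁ z) ∧
      (∀ γ, inΛ γ → ∀ z, v₂ (z + γ) = c₂ γ * v₂ z) ∧
      (¬ (∀ z, u₁ z = 0 ∧ u₂ z = 0) → ¬ ∀ z, v₁ z = 0 ∧ v₂ z = 0) := by
  have hA (i j : Fin 2) : RealAnalytic (!![0, V; W, 0] i j) := by
    fin_cases i <;> fin_cases j
    exacts [fun _ => analyticAt_const, hV, hW, fun _ => analyticAt_const]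
  have hD : ∀ i z, diracOp !![0, V; W, 0] κ ![u₁, u₂] i z = 0 := by
    simpa [diracOp, Fin.forall_fin_two, add_comm (Dbar2 u₂ _)] using And.intro heq₁ heq₂
  obtain ⟨v, v_analytic, v_eq, v_dirac, v_floquet, v_zero⟩ :=
    exists_bloch_mode_of_eq_zero hA (u := ![u₁, u₂]) (Fin.forall_fin_two.2 ⟨hu₁, hu₂⟩) hD
      (c := ![c₁, c₂]) (Fin.forall_fin_two.2 ⟨hc₁, hc₂⟩) (Fin.forall_fin_two.2 hz₀) k
  have v_dirac₁ := v_dirac 0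
  have v_dirac₂ := v_dirac 1
  simp only [diracOp, Fin.sum_univ_two] at v_dirac₁ v_dirac₂
  refine ⟨v 0, v 1, v_analytic 0, v_analytic 1, fun z hz => ⟨v_eq 0 z hz, v_eq 1 z hz⟩,
    ?_, ?_, v_floquet 0, v_floquet 1, mt fun hv z => ⟨v_zero 0 (fun z => (hv z).1) z,
      v_zero 1 (fun z => (hv z).2) z⟩⟩
  · simpa using v_dirac₁
  · simpa [add_comm (Dbar2 (v 1) _)] using v_dirac₂

theorem stmt6 (U : ℂ → ℂ) (hUan : RealAnalytic U)
    (hU1 : ∀ γ : ℂ, inΛ γ → ∀ z : ℂ,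
      U (z + γ) = Complex.exp (Complex.I * (pairing γ Kpt : ℂ)) * U z)
    (hU2 : ∀ z : ℂ, U (ω * z) = ω * U z)
    (α : ℂ) (u₁ u₂ : ℂ → ℂ) (hu₁an : RealAnalytic u₁) (hu₂an : RealAnalytic u₂)
    (heq1 : ∀ z : ℂ, Dbar2 u₁ z + α * U z * u₂ z + Kpt * u₁ z = 0)
    (heq2 : ∀ z : ℂ, α * U (-z) * u₁ z + Dbar2 u₂ z + Kpt * u₂ z = 0)
    (hFl1 : ∀ γ : ℂ, inΛ γ → ∀ z : ℂ,
      u₁ (z + γ) = Complex.exp (-Complex.I * (pairing γ Kpt : ℂ)) * u₁ z)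
    (hFl2 : ∀ γ : ℂ, inΛ γ → ∀ z : ℂ,
      u₂ (z + γ) = Complex.exp (Complex.I * (pairing γ Kpt : ℂ)) * u₂ z)
    (z₀ : ℂ) (hz₀ : u₁ z₀ = 0 ∧ u₂ z₀ = 0) :
    ∀ k : ℂ, ∃ v₁ v₂ : ℂ → ℂ,
      RealAnalytic v₁ ∧ RealAnalytic v₂ ∧
      (∀ z : ℂ, ¬ inΛ (z - z₀) →
        v₁ z = F k (z - z₀) * u₁ z ∧ v₂ z = F k (z - z₀) * u₂ z) ∧
      (∀ z : ℂ, Dbar2 v₁ z + α * U z * v₂ z + (Kpt + k) * v₁ z = 0) ∧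
      (∀ z : ℂ, α * U (-z) * v₁ z + Dbar2 v₂ z + (Kpt + k) * v₂ z = 0) ∧
      (∀ γ : ℂ, inΛ γ → ∀ z : ℂ,
        v₁ (z + γ) = Complex.exp (-Complex.I * (pairing γ Kpt : ℂ)) * v₁ z) ∧
      (∀ γ : ℂ, inΛ γ → ∀ z : ℂ,
        v₂ (z + γ) = Complex.exp (Complex.I * (pairing γ Kpt : ℂ)) * v₂ z) ∧
      (¬ (∀ z : ℂ, u₁ z = 0 ∧ u₂ z = 0) → ¬ (∀ z : ℂ, v₁ z = 0 ∧ v₂ z = 0)) :=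
  stmt6_general (V := fun z => α * U z) (W := fun z => α * U (-z))
    (fun z => analyticAt_const.mul (hUan z))
    (fun z => analyticAt_const.mul ((hUan (-z)).comp analyticAt_id.neg))
    hu₁an hu₂an heq1 heq2 hFl1 hFl2 hz₀

end
end

section
/- Let ω = e^{2πi/3}, Λ = ℤω ⊕ ℤ, ⟨z,w⟩ := Re(z·conj(w)), K = 4π/3. Let U : ℂ → ℂ be real-analytic with U(z+γ) = e^{i⟨γ,K⟩}U(z) for γ ∈ Λ and U(ωz) = ωU(z), let α ∈ ℂ and p ∈ ℂ, and let V_p denote the complex vector space of real-analytic u = (u₁,u₂) : ℂ → ℂ² satisfying D(α)u = 0 on ℂ together with the Floquet conditions u₁(z+γ) = e^{i⟨p−K,γ⟩}u₁(z) and u₂(z+γ) = e^{i⟨p+K,γ⟩}u₂(z) for all γ ∈ Λ. If some u ∈ V_p with u not identically zero vanishes at n points z₁,…,z_n ∈ ℂ that are pairwise non-congruent modulo Λ, then V_p contains n linearly independent elements (so dim_ℂ V_p ≥ n). -/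
open Complex

noncomputable section

/-- Membership in (the smooth-function model of) the kernel `V_p` of `D(α)` on `L²_p`:
real-analytic solutions of `D(α)u = 0` with the Floquet conditions of momentum `p`. -/
def memVp (U : ℂ → ℂ) (α p : ℂ) (u : (ℂ → ℂ) × (ℂ → ℂ)) : Prop :=
  RealAnalytic u.1 ∧ RealAnalytic u.2 ∧
  (∀ z : ℂ, Dbar2 u.1 z + α * U z * u.2 z = 0) ∧
  (∀ z : ℂ, α * U (-z) * u.1 z + Dbar2 u.2 z = 0) ∧
  (∀ γ : ℂ, inΛ γ → ∀ z : ℂ,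
    u.1 (z + γ) = Complex.exp (Complex.I * (pairing (p - Kpt) γ : ℂ)) * u.1 z) ∧
  (∀ γ : ℂ, inΛ γ → ∀ z : ℂ,
    u.2 (z + γ) = Complex.exp (Complex.I * (pairing (p + Kpt) γ : ℂ)) * u.2 z)

/-!
The equation `D(α)u = 0` has the form `∂u/∂z̄ = A u`, so all the derivatives `∂ᵏu/∂z̄ᵏ` vanish
wherever `u` does. Hence near a zero `x` every monomial of the Taylor series of `u` in `z - x` and
its conjugate is divisible by `z - x`, and `u = (z - x) w` with `w` real-analytic. Multiplying `u`
by a meromorphic `Λ`-periodic function whose poles are simple and lie at zeros of `u` therefore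
gives another element of `V_p`. The functions `1 + ζ(z - zᵢ) - ζ(z - z₁)` serve this purpose, and
their residues at the points `zᵢ` show that they are linearly independent.
-/

open Filter Topology

theorem norm_derivSeries_le {𝕜 E F : Type*} [NontriviallyNormedField 𝕜]
    [NormedAddCommGroup E] [NormedSpace 𝕜 E] [NormedAddCommGroup F] [NormedSpace 𝕜 F]
    (p : FormalMultilinearSeries 𝕜 E F) (n : ℕ) :
    ‖p.derivSeries n‖ ≤ (n + 1) * ‖p (n + 1)‖ := by
  have card_subsets : Fintype.card {s : Finset (Fin (1 + n)) // s.card = n} = n + 1 := by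
    simp [Fintype.card_finset_len, add_comm 1 n]
  have norm_congr : ‖p (1 + n)‖ = ‖p (n + 1)‖ := by rw [add_comm]
  calc ‖p.derivSeries n‖ ≤ ‖p.changeOriginSeries 1 n‖ := by
        refine ((ContinuousLinearMap.norm_compContinuousMultilinearMap_le _ _).trans
          (mul_le_of_le_one_left (norm_nonneg _) ?_))
        exact ContinuousLinearMap.opNorm_le_bound _ zero_le_one (by simp)
    _ ≤ (n + 1) * ‖p (1 + n)‖ := by
        have h := p.nnnorm_changeOriginSeries_le_tsum 1 n
        rw [tsum_fintype, Finset.sum_const, Finset.card_univ, card_subsets, nsmul_eq_mul] at h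
        exact_mod_cast h
    _ = (n + 1) * ‖p (n + 1)‖ := by rw [norm_congr]

theorem radius_pos_of_norm_le_geometric {𝕜 E F : Type*} [NontriviallyNormedField 𝕜]
    [NormedAddCommGroup E] [NormedSpace 𝕜 E] [NormedAddCommGroup F] [NormedSpace 𝕜 F]
    {q : FormalMultilinearSeries 𝕜 E F} {C a : ℝ} (ha : 0 < a)
    (hq : ∀ n, ‖q n‖ ≤ C * a ^ n) : 0 < q.radius := by
  have hr : 0 < Real.toNNReal a⁻¹ := Real.toNNReal_pos.2 (inv_pos.2 ha)
  refine (ENNReal.coe_pos.2 hr).trans_le (q.le_radius_of_bound C fun n => ?_)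
  calc ‖q n‖ * (Real.toNNReal a⁻¹ : ℝ) ^ n ≤ C * a ^ n * (Real.toNNReal a⁻¹ : ℝ) ^ n := by
        gcongr; exact hq n
    _ = C := by
        rw [Real.coe_toNNReal _ (inv_pos.2 ha).le, mul_assoc, ← mul_pow, mul_inv_cancel₀ ha.ne',
          one_pow, mul_one]

section Dbar

variable {E : Type*} [NormedAddCommGroup E] [NormedSpace ℂ E]

/-- The coefficient `a` in the decomposition `A h = h • a + conj h • b` of a real-linear map. -/
def linearCoeff : (ℂ →L[ℝ] E) →L[ℝ] E :=
  (2⁻¹ : ℂ) • (ContinuousLinearMap.apply ℝ E 1 - I • ContinuousLinearMap.apply ℝ E I)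

/-- The coefficient `b` in the decomposition `A h = h • a + conj h • b` of a real-linear map. -/
def conjLinearCoeff : (ℂ →L[ℝ] E) →L[ℝ] E :=
  (2⁻¹ : ℂ) • (ContinuousLinearMap.apply ℝ E 1 + I • ContinuousLinearMap.apply ℝ E I)

theorem linearCoeff_apply (A : ℂ →L[ℝ] E) : linearCoeff A = (2⁻¹ : ℂ) • (A 1 - I • A I) := rfl

theorem conjLinearCoeff_apply (A : ℂ →L[ℝ] E) :
    conjLinearCoeff A = (2⁻¹ : ℂ) • (A 1 + I • A I) := rfl

theorem norm_apply_one_add_norm_apply_I_le (A : ℂ →L[ℝ] E) :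
    2⁻¹ * (‖A 1‖ + ‖I • A I‖) ≤ 1 * ‖A‖ := by
  have h1 := A.le_opNorm 1
  have hI := A.le_opNorm I
  rw [norm_smul, norm_I, one_mul]
  rw [norm_I] at hI
  rw [norm_one] at h1
  linarith

theorem norm_linearCoeff_le : ‖(linearCoeff : (ℂ →L[ℝ] E) →L[ℝ] E)‖ ≤ 1 :=
  ContinuousLinearMap.opNorm_le_bound _ zero_le_one fun A => by
    rw [linearCoeff_apply, norm_smul, norm_inv, RCLike.norm_ofNat]
    exact le_trans (by gcongr; exact norm_sub_le _ _) (norm_apply_one_add_norm_apply_I_le A)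

theorem norm_conjLinearCoeff_le : ‖(conjLinearCoeff : (ℂ →L[ℝ] E) →L[ℝ] E)‖ ≤ 1 :=
  ContinuousLinearMap.opNorm_le_bound _ zero_le_one fun A => by
    rw [conjLinearCoeff_apply, norm_smul, norm_inv, RCLike.norm_ofNat]
    exact le_trans (by gcongr; exact norm_add_le _ _) (norm_apply_one_add_norm_apply_I_le A)

theorem smul_linearCoeff_add_conj_smul_conjLinearCoeff (A : ℂ →L[ℝ] E) (h : ℂ) :
    h • linearCoeff A + (starRingEnd ℂ) h • conjLinearCoeff A = A h := by
  have hA : A h = (h.re : ℂ) • A 1 + (h.im : ℂ) • A I := by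
    rw [coe_smul, coe_smul, ← map_smul, ← map_smul, ← map_add]
    simp
  have h_conj : (starRingEnd ℂ) h = h.re - h.im * I := by
    simp [Complex.ext_iff]
  rw [hA, linearCoeff_apply, conjLinearCoeff_apply, h_conj]
  nth_rw 1 [← re_add_im h]
  match_scalars
  · ring
  · linear_combination (-h.im : ℂ) * I_mul_I

/-- The Wirtinger derivative `∂f/∂z̄ = (∂_x f + i ∂_y f) / 2`. -/
def dbar (f : ℂ → E) (z : ℂ) : E := conjLinearCoeff (fderiv ℝ f z)

theorem dbar_congr {f g : ℂ → E} {z : ℂ} (h : f =ᶠ[𝓝 z] g) : dbar f z = dbar g z := by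
  rw [dbar, dbar, h.fderiv_eq]

theorem dbar_smul {f : ℂ → ℂ} {u : ℂ → E} {z : ℂ}
    (hf : DifferentiableAt ℂ f z) (hu : DifferentiableAt ℝ u z) :
    dbar (fun y => f y • u y) z = f z • dbar u z := by
  have h : HasFDerivAt (fun y => f y • u y) _ z :=
    (hf.hasFDerivAt.restrictScalars ℝ).smul hu.hasFDerivAt
  have : fderiv ℂ f z I = I • fderiv ℂ f z 1 := by rw [← map_smul, smul_eq_mul, mul_one]
  rw [dbar, dbar, h.fderiv]
  change (2⁻¹ : ℂ) • (f z • fderiv ℝ u z 1 + fderiv ℂ f z 1 • u z +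
    I • (f z • fderiv ℝ u z I + fderiv ℂ f z I • u z)) =
      f z • (2⁻¹ : ℂ) • (fderiv ℝ u z 1 + I • fderiv ℝ u z I)
  rw [this, smul_eq_mul]
  match_scalars
  · ring
  · linear_combination (2⁻¹ : ℂ) * fderiv ℂ f z 1 * I_mul_I
  · ring

theorem dbar_clm_apply {B : ℂ → E →L[ℂ] E} {u : ℂ → E} {z : ℂ}
    (hB : DifferentiableAt ℝ B z) (hu : DifferentiableAt ℝ u z) :
    dbar (fun y => B y (u y)) z = dbar B z (u z) + B z (dbar u z) := by
  have h : HasFDerivAt (fun y => B y (u y)) _ z :=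
    (ContinuousLinearMap.restrictScalarsL ℂ E E ℝ ℝ).hasFDerivAt_of_bilinear
      hB.hasFDerivAt hu.hasFDerivAt
  rw [dbar, h.fderiv]
  change (2⁻¹ : ℂ) • (B z (fderiv ℝ u z 1) + fderiv ℝ B z 1 (u z) +
    I • (B z (fderiv ℝ u z I) + fderiv ℝ B z I (u z))) =
      (2⁻¹ : ℂ) • (fderiv ℝ B z 1 (u z) + I • fderiv ℝ B z I (u z)) +
        B z ((2⁻¹ : ℂ) • (fderiv ℝ u z 1 + I • fderiv ℝ u z I))
  rw [map_smul, map_add, map_smul]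
  module

theorem analyticAt_clm_apply {B : ℂ → E →L[ℂ] E} {u : ℂ → E} {z : ℂ}
    (hB : AnalyticAt ℝ B z) (hu : AnalyticAt ℝ u z) :
    AnalyticAt ℝ (fun y => B y (u y)) z :=
  ((ContinuousLinearMap.restrictScalarsL ℂ E E ℝ ℝ).analyticAt_bilinear (B z, u z)).comp₂ hB hu

theorem analyticAt_dbar [CompleteSpace E] {f : ℂ → E} {z : ℂ} (hf : AnalyticAt ℝ f z) :
    AnalyticAt ℝ (dbar f) z :=
  ((conjLinearCoeff : (ℂ →L[ℝ] E) →L[ℝ] E).analyticAt _).comp hf.fderiv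

/-- The power series of `∂f/∂z`, obtained from the power series `p` of `f`. -/
def dSeries (p : FormalMultilinearSeries ℝ ℂ E) : FormalMultilinearSeries ℝ ℂ E :=
  linearCoeff.compFormalMultilinearSeries p.derivSeries

/-- The power series of `∂f/∂z̄`, obtained from the power series `p` of `f`. -/
def dbarSeries (p : FormalMultilinearSeries ℝ ℂ E) : FormalMultilinearSeries ℝ ℂ E :=
  conjLinearCoeff.compFormalMultilinearSeries p.derivSeries

theorem smul_dSeries_add_conj_smul_dbarSeries (p : FormalMultilinearSeries ℝ ℂ E) (n : ℕ) (h : ℂ) :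
    h • dSeries p n (fun _ => h) + (starRingEnd ℂ) h • dbarSeries p n (fun _ => h) =
      ((n : ℝ) + 1) • p (n + 1) fun _ => h := by
  rw [← Nat.cast_succ, Nat.cast_smul_eq_nsmul, ← p.derivSeries_apply_diag]
  exact smul_linearCoeff_add_conj_smul_conjLinearCoeff _ h

theorem hasFPowerSeriesOnBall_iterate_dbar [CompleteSpace E] {f : ℂ → E}
    {p : FormalMultilinearSeries ℝ ℂ E} {z : ℂ} {r : ENNReal} (hf : HasFPowerSeriesOnBall f p z r)
    (k : ℕ) : HasFPowerSeriesOnBall (dbar^[k] f) (dbarSeries^[k] p) z r := by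
  induction k generalizing f p with
  | zero => exact hf
  | succ _ ih =>
    exact ih ((conjLinearCoeff : (ℂ →L[ℝ] E) →L[ℝ] E).comp_hasFPowerSeriesOnBall hf.fderiv)

theorem norm_comp_derivSeries_le {L : (ℂ →L[ℝ] E) →L[ℝ] E} (hL : ‖L‖ ≤ 1)
    (p : FormalMultilinearSeries ℝ ℂ E) (n : ℕ) :
    ‖L.compFormalMultilinearSeries p.derivSeries n‖ ≤ (n + 1) * ‖p (n + 1)‖ :=
  calc ‖L.compFormalMultilinearSeries p.derivSeries n‖ ≤ ‖p.derivSeries n‖ :=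
        (ContinuousLinearMap.norm_compContinuousMultilinearMap_le _ _).trans
          (mul_le_of_le_one_left (norm_nonneg _) hL)
    _ ≤ (n + 1) * ‖p (n + 1)‖ := norm_derivSeries_le p n

/-- The real-linear map `h ↦ conj h • e`, depending linearly on `e`. -/
def conjSMul : E →L[ℝ] ℂ →L[ℝ] E :=
  ((ContinuousLinearMap.lsmul ℝ ℂ : ℂ →L[ℝ] E →L[ℝ] E).comp
    (conjCLE : ℂ →L[ℝ] ℂ)).flip

theorem conjSMul_apply (e : E) (h : ℂ) : conjSMul e h = (starRingEnd ℂ) h • e := rfl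

theorem norm_conjSMul_le : ‖(conjSMul : E →L[ℝ] ℂ →L[ℝ] E)‖ ≤ 1 :=
  ContinuousLinearMap.opNorm_le_bound₂ _ zero_le_one fun e h => by
    rw [conjSMul_apply, norm_smul, RCLike.norm_conj, one_mul, mul_comm]

/-- The power series of `f(z) / (z - x)`, where `p` is the power series at `x` of a function `f`
all of whose iterated derivatives `∂ᵏf/∂z̄ᵏ` vanish at `x`. The recursion divides Euler's identity
`(n + 1) pₙ₊₁(h) = h (∂p)ₙ(h) + h̄ (∂̄p)ₙ(h)` by `h`. -/
def quotientSeries (p : FormalMultilinearSeries ℝ ℂ E) : FormalMultilinearSeries ℝ ℂ E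
  | 0 => dSeries p 0
  | n + 1 => (((n + 1 : ℕ) + 1 : ℝ)⁻¹) • (dSeries p (n + 1) +
      ContinuousMultilinearMap.uncurryRight (Ei := fun _ : Fin (n + 1) => ℂ)
        (conjSMul.compContinuousMultilinearMap (quotientSeries (dbarSeries p) n)))

theorem quotientSeries_succ_apply_diag (p : FormalMultilinearSeries ℝ ℂ E) (n : ℕ) (h : ℂ) :
    quotientSeries p (n + 1) (fun _ => h) = (((n + 1 : ℕ) + 1 : ℝ)⁻¹) •
      (dSeries p (n + 1) (fun _ => h) +
        (starRingEnd ℂ) h • quotientSeries (dbarSeries p) n fun _ => h) :=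
  rfl

theorem smul_quotientSeries_apply_diag {p : FormalMultilinearSeries ℝ ℂ E}
    (hp : ∀ k, dbarSeries^[k] p 0 = 0) (n : ℕ) (h : ℂ) :
    h • quotientSeries p n (fun _ => h) = p (n + 1) fun _ => h := by
  induction n generalizing p with
  | zero =>
    have h0 : dbarSeries p 0 = 0 := hp 1
    simpa [h0] using! smul_dSeries_add_conj_smul_dbarSeries p 0 h
  | succ n ih =>
    have ih_dbar : h • quotientSeries (dbarSeries p) n (fun _ => h) =
        dbarSeries p (n + 1) fun _ => h := ih fun k => hp (k + 1)
    rw [quotientSeries_succ_apply_diag, smul_comm, smul_add, smul_comm h, ih_dbar,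
      smul_dSeries_add_conj_smul_dbarSeries, inv_smul_smul₀ (by positivity)]

theorem norm_quotientSeries_le (p : FormalMultilinearSeries ℝ ℂ E) (n : ℕ) :
    ‖quotientSeries p n‖ ≤ (n + 1) * ‖p (n + 1)‖ := by
  induction n generalizing p with
  | zero => exact norm_comp_derivSeries_le norm_linearCoeff_le p 0
  | succ n ih =>
    have norm_conj_term_le :
        ‖ContinuousMultilinearMap.uncurryRight (Ei := fun _ : Fin (n + 1) => ℂ)
          (conjSMul.compContinuousMultilinearMap (quotientSeries (dbarSeries p) n))‖ ≤
          (n + 1) * (((n + 1 : ℕ) + 1) * ‖p (n + 1 + 1)‖) :=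
      calc _ = ‖conjSMul.compContinuousMultilinearMap (quotientSeries (dbarSeries p) n)‖ :=
            ContinuousMultilinearMap.uncurryRight_norm _
        _ ≤ ‖quotientSeries (dbarSeries p) n‖ :=
            (ContinuousLinearMap.norm_compContinuousMultilinearMap_le _ _).trans
              (mul_le_of_le_one_left (norm_nonneg _) norm_conjSMul_le)
        _ ≤ (n + 1) * ‖dbarSeries p (n + 1)‖ := ih _
        _ ≤ (n + 1) * (((n + 1 : ℕ) + 1) * ‖p (n + 1 + 1)‖) := by
            gcongr
            exact norm_comp_derivSeries_le norm_conjLinearCoeff_le p (n + 1)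
    rw [quotientSeries, norm_smul, Real.norm_of_nonneg (by positivity),
      inv_mul_le_iff₀ (by positivity)]
    calc _ ≤ ((n + 1 : ℕ) + 1) * ‖p (n + 1 + 1)‖ +
          (n + 1) * (((n + 1 : ℕ) + 1) * ‖p (n + 1 + 1)‖) :=
          norm_add_le_of_le (norm_comp_derivSeries_le norm_linearCoeff_le p (n + 1))
            norm_conj_term_le
      _ = ((n + 1 : ℕ) + 1) * (((n + 1 : ℕ) + 1) * ‖p (n + 1 + 1)‖) := by
          push_cast; ring

theorem exists_analyticAt_eventually_eq_sub_smul [CompleteSpace E] {f : ℂ → E} {x : ℂ}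
    (hf : AnalyticAt ℝ f x) (hdbar : ∀ k, dbar^[k] f x = 0) :
    ∃ w : ℂ → E, AnalyticAt ℝ w x ∧ ∀ᶠ z in 𝓝 x, f z = (z - x) • w z := by
  obtain ⟨p, r, hp⟩ := hf
  have hp0 (k : ℕ) : dbarSeries^[k] p 0 = 0 := by
    ext v
    rw [(hasFPowerSeriesOnBall_iterate_dbar hp k).coeff_zero, hdbar k]
    rfl
  obtain ⟨C, a, -, ha, hpa⟩ := p.le_mul_pow_of_radius_pos (hp.r_pos.trans_le hp.r_le)
  have quotient_radius_pos : 0 < (quotientSeries p).radius :=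
    radius_pos_of_norm_le_geometric (C := C * a) (a := 2 * a) (by positivity) fun n =>
      calc ‖quotientSeries p n‖ ≤ (n + 1) * ‖p (n + 1)‖ := norm_quotientSeries_le p n
        _ ≤ 2 ^ n * (C * a ^ (n + 1)) := by
          gcongr
          · exact_mod_cast Nat.lt_two_pow_self
          · exact hpa _
        _ = C * a * (2 * a) ^ n := by ring
  have hw := (quotientSeries p).hasFPowerSeriesOnBall quotient_radius_pos
  refine ⟨fun z => (quotientSeries p).sum (z - x), ?_, ?_⟩
  · exact (hw.analyticAt.comp_of_eq (analyticAt_id.sub analyticAt_const) (sub_self x))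
  filter_upwards [Metric.eball_mem_nhds x (lt_min hp.r_pos quotient_radius_pos)] with z hz
  have hz' : z - x ∈ Metric.eball (0 : ℂ) (min r (quotientSeries p).radius) := by
    simpa [Metric.mem_eball, edist_eq_enorm_sub] using hz
  have sum_f := hp.hasSum (Metric.eball_subset_eball (min_le_left _ _) hz')
  have sum_w := (hw.hasSum (Metric.eball_subset_eball (min_le_right _ _) hz')).const_smul (z - x)
  have sum_f' := (hasSum_nat_add_iff' 1).2 sum_f
  simp only [smul_quotientSeries_apply_diag hp0] at sum_w
  simpa [hp.coeff_zero, hp0 0, show p 0 = 0 from hp0 0] using sum_f'.unique sum_w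

end Dbar

section FirstOrderSystem

variable {E : Type*} [NormedAddCommGroup E] [NormedSpace ℂ E]

theorem exists_iterate_dbar_eq_clm_apply [CompleteSpace E] {A : ℂ → E →L[ℂ] E} {u : ℂ → E}
    (hA : ∀ z, AnalyticAt ℝ A z) (hu : ∀ z, AnalyticAt ℝ u z) (hAu : ∀ z, dbar u z = A z (u z))
    (k : ℕ) : ∃ B : ℂ → E →L[ℂ] E,
      (∀ z, AnalyticAt ℝ B z) ∧ dbar^[k] u = fun z => B z (u z) := by
  induction k with
  | zero => exact ⟨fun _ => .id ℂ E, fun _ => analyticAt_const, rfl⟩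
  | succ k ih =>
    obtain ⟨B, hB, hBu⟩ := ih
    let compL : (E →L[ℂ] E) →L[ℝ] (E →L[ℂ] E) →L[ℝ] (E →L[ℂ] E) :=
      (ContinuousLinearMap.restrictScalarsL ℂ _ _ ℝ ℝ).comp
        ((ContinuousLinearMap.compL ℂ E E E).restrictScalars ℝ)
    refine ⟨fun z => dbar B z + (B z).comp (A z), fun z => ?_, ?_⟩
    · exact (analyticAt_dbar (hB z)).add
        ((compL.analyticAt_bilinear (B z, A z)).comp₂ (hB z) (hA z))
    · rw [Function.iterate_succ_apply', hBu]
      ext z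
      rw [dbar_clm_apply (hB z).differentiableAt (hu z).differentiableAt, hAu]
      rfl

theorem exists_analyticAt_eventually_eq_sub_smul_of_dbar_eq [CompleteSpace E] {A : ℂ → E →L[ℂ] E}
    {u : ℂ → E} (hA : ∀ z, AnalyticAt ℝ A z) (hu : ∀ z, AnalyticAt ℝ u z)
    (hAu : ∀ z, dbar u z = A z (u z)) {x : ℂ} (hx : u x = 0) :
    ∃ w : ℂ → E, AnalyticAt ℝ w x ∧ ∀ᶠ z in 𝓝 x, u z = (z - x) • w z := by
  refine exists_analyticAt_eventually_eq_sub_smul (hu x) fun k => ?_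
  obtain ⟨B, -, hB⟩ := exists_iterate_dbar_eq_clm_apply hA hu hAu k
  simp only [hB, hx, map_zero]

end FirstOrderSystem

section SimplePole

/-- `f` has at most a simple pole at `z₀`, with residue `c` (the case `c = 0` being a removable
singularity); the value `f z₀` is irrelevant. -/
def HasSimpleResidueAt (f : ℂ → ℂ) (c z₀ : ℂ) : Prop :=
  ∃ g : ℂ → ℂ, AnalyticAt ℂ g z₀ ∧ f =ᶠ[𝓝[≠] z₀] fun z => c / (z - z₀) + g z

namespace HasSimpleResidueAt

variable {f g : ℂ → ℂ} {b c z₀ : ℂ}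

theorem meromorphicAt (hf : HasSimpleResidueAt f c z₀) : MeromorphicAt f z₀ := by
  obtain ⟨g, hg, hfg⟩ := hf
  refine MeromorphicAt.congr ?_ hfg.symm
  exact ((MeromorphicAt.const c z₀).div (by fun_prop)).add hg.meromorphicAt

theorem of_analyticAt (hf : AnalyticAt ℂ f z₀) : HasSimpleResidueAt f 0 z₀ :=
  ⟨f, hf, .of_forall fun z => by simp⟩

theorem add (hf : HasSimpleResidueAt f b z₀) (hg : HasSimpleResidueAt g c z₀) :
    HasSimpleResidueAt (fun z => f z + g z) (b + c) z₀ := by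
  obtain ⟨F, hF, hfF⟩ := hf
  obtain ⟨G, hG, hgG⟩ := hg
  refine ⟨fun z => F z + G z, hF.add hG, ?_⟩
  filter_upwards [hfF, hgG] with z hf hg
  rw [hf, hg]; ring

theorem const_mul (hf : HasSimpleResidueAt f c z₀) (b : ℂ) :
    HasSimpleResidueAt (fun z => b * f z) (b * c) z₀ := by
  obtain ⟨F, hF, hfF⟩ := hf
  refine ⟨fun z => b * F z, analyticAt_const.mul hF, ?_⟩
  filter_upwards [hfF] with z hf
  rw [hf]; ring

theorem sub (hf : HasSimpleResidueAt f b z₀) (hg : HasSimpleResidueAt g c z₀) :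
    HasSimpleResidueAt (fun z => f z - g z) (b - c) z₀ := by
  simpa [sub_eq_add_neg] using hf.add (hg.const_mul (-1))

theorem sum {ι : Type*} {f : ι → ℂ → ℂ} {c : ι → ℂ} {s : Finset ι}
    (hf : ∀ i ∈ s, HasSimpleResidueAt (f i) (c i) z₀) :
    HasSimpleResidueAt (fun z => ∑ i ∈ s, f i z) (∑ i ∈ s, c i) z₀ := by
  choose! F hF hfF using hf
  refine ⟨fun z => ∑ i ∈ s, F i z, Finset.analyticAt_fun_sum s hF, ?_⟩
  filter_upwards [(eventually_all_finset s).2 hfF] with z hz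
  rw [Finset.sum_congr rfl hz, Finset.sum_add_distrib, Finset.sum_div]

theorem comp_sub_const {a : ℂ} (hf : HasSimpleResidueAt f c (z₀ - a)) :
    HasSimpleResidueAt (fun z => f (z - a)) c z₀ := by
  obtain ⟨F, hF, hfF⟩ := hf
  refine ⟨fun z => F (z - a), hF.comp_of_eq (by fun_prop) rfl, ?_⟩
  have h_tendsto : Tendsto (fun z => z - a) (𝓝[≠] z₀) (𝓝[≠] (z₀ - a)) := map_subRight_nhdsNE.le
  filter_upwards [h_tendsto.eventually hfF] with z hz
  rw [hz, sub_sub_sub_cancel_right]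

theorem eq_zero_of_eventuallyEq_zero (hf : HasSimpleResidueAt f c z₀) (h0 : f =ᶠ[𝓝[≠] z₀] 0) :
    c = 0 := by
  obtain ⟨g, hg, hfg⟩ := hf
  have h_tendsto : Tendsto (fun z => (z - z₀) * g z) (𝓝[≠] z₀) (𝓝 0) := by
    have : ContinuousAt (fun z => (z - z₀) * g z) z₀ := by fun_prop
    simpa [ContinuousAt] using this.mono_left nhdsWithin_le_nhds
  have h_const : (fun z => (z - z₀) * g z) =ᶠ[𝓝[≠] z₀] fun _ => -c := by
    filter_upwards [h0, hfg, self_mem_nhdsWithin] with z hz0 hz hne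
    have hne : z - z₀ ≠ 0 := sub_ne_zero.2 hne
    have : c / (z - z₀) + g z = 0 := hz.symm.trans hz0
    field_simp at this
    linear_combination this
  exact neg_eq_zero.1 (tendsto_nhds_unique (h_const.tendsto) h_tendsto)

end HasSimpleResidueAt

end SimplePole

section Gluing

variable {E : Type*} [NormedAddCommGroup E] [NormedSpace ℂ E]

theorem eq_of_eventuallyEq_nhdsNE {X Y : Type*} [TopologicalSpace X] [T1Space X]
    [TopologicalSpace Y] [T2Space Y] {v w : X → Y} {x : X} [(𝓝[≠] x).NeBot]
    (hv : ContinuousAt v x) (hw : ContinuousAt w x) (h : v =ᶠ[𝓝[≠] x] w) : v x = w x :=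
  ((hv.eventuallyEq_nhds_iff_eventuallyEq_nhdsNE hw).1 h).eq_of_nhds

theorem exists_analyticAt_eventuallyEq_nhdsNE [CompleteSpace E] {F : ℂ → E}
    (hF : ∀ z, ∃ g : ℂ → E, AnalyticAt ℝ g z ∧ F =ᶠ[𝓝[≠] z] g) :
    ∃ v : ℂ → E, (∀ z, AnalyticAt ℝ v z) ∧ ∀ z, v =ᶠ[𝓝[≠] z] F := by
  choose g hg hFg using hF
  have germ_eq (z₀ : ℂ) : (fun z => g z z) =ᶠ[𝓝 z₀] g z₀ := by
    refine eventuallyEq_nhds_of_eventuallyEq_nhdsNE ?_ rfl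
    filter_upwards [eventually_nhdsNE_eventually_nhds_iff.2 (hFg z₀),
      eventually_nhdsWithin_of_eventually_nhds (hg z₀).eventually_analyticAt] with z hz hgz
    have h : g z =ᶠ[𝓝[≠] z] g z₀ := (hFg z).symm.trans (hz.filter_mono nhdsWithin_le_nhds)
    exact eq_of_eventuallyEq_nhdsNE (hg z).continuousAt hgz.continuousAt h
  exact ⟨fun z => g z z, fun z => (hg z).congr (germ_eq z).symm,
    fun z => ((germ_eq z).filter_mono nhdsWithin_le_nhds).trans (hFg z).symm⟩

theorem linearIndependent_of_eventuallyEq_smul {ι : Type*} {u : ℂ → E} {v : ι → ℂ → E}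
    {Φ : ι → ℂ → ℂ} (hu : ∀ z, AnalyticAt ℝ u z) (hu0 : u ≠ 0)
    (hΦ : ∀ i z, MeromorphicAt (Φ i) z) (hv : ∀ i z, v i =ᶠ[𝓝[≠] z] fun y => Φ i y • u y)
    (hind : ∀ (s : Finset ι) (c : ι → ℂ),
      (∀ z, (fun y => ∑ i ∈ s, c i * Φ i y) =ᶠ[𝓝[≠] z] 0) → ∀ i ∈ s, c i = 0) :
    LinearIndependent ℂ v := by
  refine linearIndependent_iff'.2 fun s c hc => hind s c fun z => ?_
  have h_smul : ∀ᶠ y in 𝓝[≠] z, (∑ i ∈ s, c i * Φ i y) • u y = 0 := by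
    filter_upwards [(eventually_all_finset s).2 fun i _ => hv i z] with y hy
    calc (∑ i ∈ s, c i * Φ i y) • u y = ∑ i ∈ s, c i • v i y := by
          rw [Finset.sum_smul]
          exact Finset.sum_congr rfl fun i hi => by rw [hy i hi, mul_smul]
      _ = (∑ i ∈ s, c i • v i) y := by simp
      _ = 0 := by rw [hc]; rfl
  have hmero : MeromorphicAt (fun y => ∑ i ∈ s, c i * Φ i y) z := by
    have := hΦ
    fun_prop
  refine hmero.eventually_eq_zero_or_eventually_ne_zero.resolve_right fun hne => hu0 ?_
  have hu_near : u =ᶠ[𝓝[≠] z] 0 := by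
    filter_upwards [h_smul, hne] with y hy hny
    exact (smul_eq_zero.1 hy).resolve_left hny
  refine AnalyticOnNhd.eq_of_eventuallyEq (𝕜 := ℝ) (fun z _ => hu z) (fun z _ => analyticAt_const)
    (z₀ := z) ?_
  exact ((hu z).continuousAt.eventuallyEq_nhds_iff_eventuallyEq_nhdsNE
    continuousAt_const).1 hu_near

end Gluing

section Floquet

variable {E : Type*} [NormedAddCommGroup E] [NormedSpace ℂ E]

/-- Real-analytic solutions `u` of the first-order system `∂u/∂z̄ = A u` with the Floquet conditions
`u(z + γ) = M(γ) u(z)` for `γ` in the lattice `Λ`. -/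
structure IsFloquetSolution (A : ℂ → E →L[ℂ] E) (Λ : Submodule ℤ ℂ) (M : ℂ → E →L[ℂ] E)
    (u : ℂ → E) : Prop where
  analyticAt (z : ℂ) : AnalyticAt ℝ u z
  dbar_eq (z : ℂ) : dbar u z = A z (u z)
  apply_add_of_mem (γ : ℂ) (hγ : γ ∈ Λ) (z : ℂ) : u (z + γ) = M γ (u z)

namespace IsFloquetSolution

variable {A M : ℂ → E →L[ℂ] E} {Λ : Submodule ℤ ℂ} {u : ℂ → E}

theorem exists_analyticAt_smul_eventuallyEq [CompleteSpace E] (hA : ∀ z, AnalyticAt ℝ A z)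
    (hu : IsFloquetSolution A Λ M u) {Φ : ℂ → ℂ} {c z₀ : ℂ} (hΦ : HasSimpleResidueAt Φ c z₀)
    (hc : c ≠ 0 → u z₀ = 0) :
    ∃ g : ℂ → E, AnalyticAt ℝ g z₀ ∧ (fun z => Φ z • u z) =ᶠ[𝓝[≠] z₀] g := by
  obtain ⟨g, hg, hΦg⟩ := hΦ
  have hgu : AnalyticAt ℝ (fun z => g z • u z) z₀ := hg.restrictScalars.smul (hu.analyticAt z₀)
  by_cases hc0 : c = 0
  · refine ⟨_, hgu, ?_⟩
    filter_upwards [hΦg] with z hz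
    rw [hz, hc0, zero_div, zero_add]
  obtain ⟨w, hw, huw⟩ := exists_analyticAt_eventually_eq_sub_smul_of_dbar_eq hA hu.analyticAt
    hu.dbar_eq (hc hc0)
  refine ⟨fun z => c • w z + g z • u z, (analyticAt_const.smul hw).add hgu, ?_⟩
  filter_upwards [hΦg, eventually_nhdsWithin_of_eventually_nhds huw, self_mem_nhdsWithin]
    with z hz huz hne
  have hne : z - z₀ ≠ 0 := sub_ne_zero.2 hne
  rw [hz, add_smul, div_eq_mul_inv, mul_smul]
  nth_rw 1 [huz]
  rw [inv_smul_smul₀ hne]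

theorem exists_eventuallyEq_smul [CompleteSpace E] (hA : ∀ z, AnalyticAt ℝ A z)
    (hu : IsFloquetSolution A Λ M u) {Φ c : ℂ → ℂ} (hΦ : ∀ z, HasSimpleResidueAt Φ (c z) z)
    (hΦΛ : ∀ γ ∈ Λ, ∀ z, Φ (z + γ) = Φ z) (hc : ∀ z, c z ≠ 0 → u z = 0) :
    ∃ v, IsFloquetSolution A Λ M v ∧ ∀ z, v =ᶠ[𝓝[≠] z] fun y => Φ y • u y := by
  obtain ⟨v, hv, hvΦ⟩ := exists_analyticAt_eventuallyEq_nhdsNE fun z =>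
    hu.exists_analyticAt_smul_eventuallyEq hA (hΦ z) (hc z)
  have hΦ_diff (z₀ : ℂ) : ∀ᶠ z in 𝓝[≠] z₀, DifferentiableAt ℂ Φ z :=
    (hΦ z₀).meromorphicAt.eventually_analyticAt.mono fun _ h => h.differentiableAt
  refine ⟨v, ⟨hv, fun z => ?_, fun γ hγ z => ?_⟩, hvΦ⟩
  · refine eq_of_eventuallyEq_nhdsNE (analyticAt_dbar (hv z)).continuousAt
      (analyticAt_clm_apply (hA z) (hv z)).continuousAt ?_
    filter_upwards [hvΦ z, eventually_nhdsNE_eventually_nhds_iff.2 (hvΦ z), hΦ_diff z]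
      with y hy hvy hΦy
    rw [dbar_congr hvy, dbar_smul hΦy (hu.analyticAt y).differentiableAt, hu.dbar_eq, hy, map_smul]
  · refine eq_of_eventuallyEq_nhdsNE (v := fun y => v (y + γ)) (w := fun y => M γ (v y)) ?_ ?_ ?_
    · exact (hv (z + γ)).continuousAt.comp_of_eq (by fun_prop) rfl
    · exact (M γ).continuous.continuousAt.comp (hv z).continuousAt
    have h_tendsto : Tendsto (fun y => y + γ) (𝓝[≠] z) (𝓝[≠] (z + γ)) :=
      map_add_right_nhdsNE.le
    filter_upwards [hvΦ z, h_tendsto.eventually (hvΦ (z + γ))] with y hy hyγ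
    rw [hyγ, hy, hΦΛ γ hγ, hu.apply_add_of_mem γ hγ, map_smul]

end IsFloquetSolution

end Floquet

section WeierstrassZeta

theorem norm_one_div_sub_add_one_div_add_div_sq_le {r : ℝ} {z l : ℂ} (hr : 0 < r) (hz : ‖z‖ < r)
    (hl : 2 * r ≤ ‖l‖) :
    ‖1 / (z - l) + 1 / l + z / l ^ 2‖ ≤ 2 * r ^ 2 * ‖l‖ ^ (-3 : ℝ) := by
  have hl0 : 0 < ‖l‖ := by linarith
  have hl_ne : l ≠ 0 := norm_pos_iff.1 hl0
  have h_dist : ‖l‖ / 2 ≤ ‖z - l‖ := by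
    rw [norm_sub_rev]
    linarith [norm_sub_norm_le l z]
  have hzl : z - l ≠ 0 := norm_pos_iff.1 (by linarith)
  calc ‖1 / (z - l) + 1 / l + z / l ^ 2‖ = ‖z ^ 2 / (l ^ 2 * (z - l))‖ := by
        congr 1
        field
    _ = ‖z‖ ^ 2 / (‖l‖ ^ 2 * ‖z - l‖) := by simp
    _ ≤ r ^ 2 / (‖l‖ ^ 2 * (‖l‖ / 2)) := by gcongr
    _ = 2 * r ^ 2 / ‖l‖ ^ 3 := by field
    _ = 2 * r ^ 2 * ‖l‖ ^ (-3 : ℝ) := by norm_cast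

/-- The Weierstrass zeta series of the lattice of `L` without its `l₀`-term; it isolates the pole
of `weierstrassZeta L` at `l₀`. -/
def weierstrassZetaExcept (L : PeriodPair) (l₀ z : ℂ) : ℂ :=
  ∑' l : L.lattice, if l = l₀ then 0 else (1 / (z - l) + 1 / l + z / (l : ℂ) ^ 2)

/-- The Weierstrass zeta function of the lattice of `L`. As `x / 0 = 0`, the term of the series at
`l = 0` is `1 / z`, as it should be. -/
def weierstrassZeta (L : PeriodPair) (z : ℂ) : ℂ :=
  ∑' l : L.lattice, (1 / (z - l) + 1 / l + z / (l : ℂ) ^ 2)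

variable (L : PeriodPair)

theorem hasSumLocallyUniformly_weierstrassZetaExcept (l₀ : ℂ) :
    HasSumLocallyUniformly
      (fun (l : L.lattice) (z : ℂ) =>
        if l = l₀ then 0 else (1 / (z - l) + 1 / l + z / (l : ℂ) ^ 2))
      (weierstrassZetaExcept L l₀) := by
  have h_summable : Summable fun l : L.lattice => ‖l‖ ^ (-3 : ℝ) :=
    ZLattice.summable_norm_rpow _ _ (by rw [L.finrank_lattice]; norm_num)
  refine L.hasSumLocallyUniformly_aux (u := (2 * · ^ 2 * ‖·‖ ^ (-3 : ℝ))) _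
    (fun _ _ => h_summable.mul_left _) fun r hr => eventually_atTop.2 ⟨2 * r, ?_⟩
  rintro _ hR z hz l rfl
  split_ifs
  · rw [norm_zero]
    positivity
  · exact norm_one_div_sub_add_one_div_add_div_sq_le hr hz hR

theorem analyticAt_weierstrassZetaExcept (l₀ : ℂ) :
    AnalyticAt ℂ (weierstrassZetaExcept L l₀) l₀ := by
  have h_diff : DifferentiableOn ℂ (weierstrassZetaExcept L l₀) (L.lattice \ {l₀})ᶜ := by
    refine (hasSumLocallyUniformly_weierstrassZetaExcept
      L l₀).hasSumLocallyUniformlyOn.differentiableOn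
      (.of_forall fun s => .fun_sum fun l _ z hz => ?_) L.isOpen_compl_lattice_sdiff
    split_ifs with hl
    · exact differentiableWithinAt_const _
    · have hzl : z - l ≠ 0 := fun h => hz ⟨sub_eq_zero.1 h ▸ l.2, fun hz₀ =>
        hl ((sub_eq_zero.1 h).symm.trans hz₀)⟩
      fun_prop (disch := exact hzl)
  exact h_diff.analyticAt (L.compl_lattice_sdiff_singleton_mem_nhds l₀)

theorem weierstrassZetaExcept_add (l₀ : L.lattice) (z : ℂ) :
    weierstrassZetaExcept L l₀ z + (1 / (z - l₀) + 1 / l₀ + z / (l₀ : ℂ) ^ 2) =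
      weierstrassZeta L z := by
  set t : L.lattice → ℂ := fun l => 1 / (z - l) + 1 / l + z / (l : ℂ) ^ 2
  have h_single : HasSum (fun l => if l = l₀ then t l₀ else 0) (t l₀) := hasSum_ite_eq l₀ (t l₀)
  have h_except := (hasSumLocallyUniformly_weierstrassZetaExcept L l₀).hasSum (x := z)
  refine ((h_except.add h_single).tsum_eq.symm.trans (tsum_congr fun l => ?_))
  by_cases hl : l = l₀ <;> simp [hl, t]

theorem weierstrassZetaExcept_of_notMem {l₀ : ℂ} (hl₀ : l₀ ∉ L.lattice) :
    weierstrassZetaExcept L l₀ = weierstrassZeta L := by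
  funext z
  exact tsum_congr fun l => if_neg fun h : (l : ℂ) = l₀ => hl₀ (h ▸ l.2)

theorem hasSum_weierstrassZeta (z : ℂ) :
    HasSum (fun l : L.lattice => 1 / (z - l) + 1 / l + z / (l : ℂ) ^ 2) (weierstrassZeta L z) := by
  have h_except := (hasSumLocallyUniformly_weierstrassZetaExcept L (L.ω₁ / 2)).hasSum (x := z)
  rw [weierstrassZetaExcept_of_notMem L L.ω₁_div_two_notMem_lattice] at h_except
  exact h_except.congr_fun fun l =>
    (if_neg fun h : (l : ℂ) = L.ω₁ / 2 => L.ω₁_div_two_notMem_lattice (h ▸ l.2)).symm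

open Classical in
theorem hasSimpleResidueAt_weierstrassZeta (z₀ : ℂ) :
    HasSimpleResidueAt (weierstrassZeta L) (if z₀ ∈ L.lattice then 1 else 0) z₀ := by
  have h_except := analyticAt_weierstrassZetaExcept L z₀
  split_ifs with hz₀
  · refine ⟨fun z => weierstrassZetaExcept L z₀ z + (1 / z₀ + z / z₀ ^ 2), by fun_prop, ?_⟩
    refine .of_forall fun z => ?_
    rw [← weierstrassZetaExcept_add L ⟨z₀, hz₀⟩ z]
    ring
  · rw [weierstrassZetaExcept_of_notMem L hz₀] at h_except
    exact .of_analyticAt h_except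

theorem hasSum_one_div_add_sq_sub_one_div_sq (l : L.lattice) :
    HasSum (fun m : L.lattice => 1 / ((m : ℂ) + l) ^ 2 - 1 / (m : ℂ) ^ 2) 0 := by
  have h := L.hasSum_weierstrassP (-l)
  rw [L.weierstrassP_neg, L.weierstrassP_coe] at h
  convert h using 4 with m
  ring

theorem weierstrassZeta_add_sub_weierstrassZeta_eq (l : L.lattice) (z w : ℂ) :
    weierstrassZeta L (z + l) - weierstrassZeta L z =
      weierstrassZeta L (w + l) - weierstrassZeta L w := by
  have h_diff (y : ℂ) := ((Equiv.addRight l).hasSum_iff.2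
    (hasSum_weierstrassZeta L (y + l))).sub (hasSum_weierstrassZeta L y)
  have h_coeff := (hasSum_one_div_add_sq_sub_one_div_sq L l).mul_left (z - w)
  rw [mul_zero] at h_coeff
  refine sub_eq_zero.1 (((h_diff z).sub (h_diff w)).unique (h_coeff.congr_fun fun m => ?_))
  simp only [Function.comp_apply, Equiv.coe_addRight, Submodule.coe_add, add_sub_add_right_eq_sub]
  ring

end WeierstrassZeta

section PoleMultiplier

/-- The elliptic function `1 + ζ(z - a) - ζ(z - b)`, whose only poles are simple poles at `a` and
`b` modulo the lattice; the constant `1` makes it invertible when `a = b`. -/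
def poleMultiplier (L : PeriodPair) (a b z : ℂ) : ℂ :=
  1 + (weierstrassZeta L (z - a) - weierstrassZeta L (z - b))

variable (L : PeriodPair) (a b : ℂ)

theorem poleMultiplier_self (z : ℂ) : poleMultiplier L a a z = 1 := by
  rw [poleMultiplier, sub_self, add_zero]

theorem poleMultiplier_add_of_mem {l : ℂ} (hl : l ∈ L.lattice) (z : ℂ) :
    poleMultiplier L a b (z + l) = poleMultiplier L a b z := by
  have h := weierstrassZeta_add_sub_weierstrassZeta_eq L ⟨l, hl⟩ (z - a) (z - b)
  rw [poleMultiplier, poleMultiplier, add_sub_right_comm z l a, add_sub_right_comm z l b]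
  linear_combination h

open Classical in
theorem hasSimpleResidueAt_poleMultiplier (z₀ : ℂ) :
    HasSimpleResidueAt (poleMultiplier L a b)
      ((if z₀ - a ∈ L.lattice then 1 else 0) - if z₀ - b ∈ L.lattice then 1 else 0) z₀ := by
  have h := (HasSimpleResidueAt.of_analyticAt (analyticAt_const (v := 1))).add
    ((hasSimpleResidueAt_weierstrassZeta L (z₀ - a)).comp_sub_const.sub
      (hasSimpleResidueAt_weierstrassZeta L (z₀ - b)).comp_sub_const)
  rwa [zero_add] at h

theorem eq_zero_of_sum_mul_poleMultiplier_eventuallyEq_zero {ι : Type*} {z : ι → ℂ} {i₀ : ι}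
    (hz : Pairwise fun i j => z i - z j ∉ L.lattice) {s : Finset ι} {c : ι → ℂ}
    (h0 : ∀ y, (fun w => ∑ i ∈ s, c i * poleMultiplier L (z i) (z i₀) w) =ᶠ[𝓝[≠] y] 0)
    {i : ι} (hi : i ∈ s) : c i = 0 := by
  classical
  have h_ne {j : ι} (hj : j ∈ s) (hj₀ : j ≠ i₀) : c j = 0 := by
    have h_res := HasSimpleResidueAt.sum fun k (_ : k ∈ s) =>
      (hasSimpleResidueAt_poleMultiplier L (z k) (z i₀) (z j)).const_mul (c k)
    have h_delta (k : ι) : z j - z k ∈ L.lattice ↔ j = k :=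
      ⟨fun h => by_contra fun hjk => hz hjk h, fun h => by simp [h]⟩
    simpa [h_delta, hj, hj₀] using h_res.eq_zero_of_eventuallyEq_zero (h0 (z j))
  obtain rfl | hi₀ := eq_or_ne i i₀
  · obtain ⟨w, hw⟩ := (h0 0).exists
    calc c i = ∑ j ∈ s, c j * poleMultiplier L (z j) (z i) w := by
          rw [Finset.sum_eq_single_of_mem i hi fun j hj hji => by rw [h_ne hj hji, zero_mul],
            poleMultiplier_self, mul_one]
      _ = 0 := hw
  · exact h_ne hi hi₀

end PoleMultiplier

section FloquetMultiplicity

variable {E : Type*} [NormedAddCommGroup E] [NormedSpace ℂ E]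

theorem IsFloquetSolution.exists_linearIndependent [CompleteSpace E] {A M : ℂ → E →L[ℂ] E}
    {L : PeriodPair} {u : ℂ → E} (hA : ∀ z, AnalyticAt ℝ A z)
    (hu : IsFloquetSolution A L.lattice M u) (hu0 : u ≠ 0) {ι : Type*} {z : ι → ℂ}
    (hz : Pairwise fun i j => z i - z j ∉ L.lattice) (huz : ∀ i, u (z i) = 0) :
    ∃ v : ι → ℂ → E, (∀ i, IsFloquetSolution A L.lattice M (v i)) ∧ LinearIndependent ℂ v := by
  classical
  obtain _ | ⟨⟨i₀⟩⟩ := isEmpty_or_nonempty ι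
  · exact ⟨isEmptyElim, isEmptyElim, linearIndependent_empty_type⟩
  have h_zero {i : ι} {y : ℂ} (hy : y - z i ∈ L.lattice) : u y = 0 := by
    rw [← add_sub_cancel (z i) y, hu.apply_add_of_mem _ hy, huz, map_zero]
  have h_res (i : ι) := hasSimpleResidueAt_poleMultiplier L (z i) (z i₀)
  choose v hv hvΦ using fun i => hu.exists_eventuallyEq_smul hA (h_res i)
    (fun _ => poleMultiplier_add_of_mem L (z i) (z i₀)) fun y hy => by
      by_contra hy0
      exact hy (by rw [if_neg (mt h_zero hy0), if_neg (mt h_zero hy0), sub_zero])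
  exact ⟨v, hv, linearIndependent_of_eventuallyEq_smul hu.analyticAt hu0
    (fun i y => (h_res i y).meromorphicAt) hvΦ fun _ _ h0 _ =>
      eq_zero_of_sum_mul_poleMultiplier_eventuallyEq_zero L hz h0⟩

end FloquetMultiplicity

section HexagonalLattice

theorem omega_im_ne_zero : ω.im ≠ 0 := by
  have h_arg : 2 * (Real.pi : ℂ) * I / 3 = (2 * Real.pi / 3 : ℝ) * I := by
    push_cast
    ring
  rw [ω, h_arg, exp_ofReal_mul_I_im]
  exact (Real.sin_pos_of_pos_of_lt_pi (by positivity) (by linarith [Real.pi_pos])).ne'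

/-- The basis `ω, 1` of the hexagonal lattice `Λ`. -/
def hexagonalPeriodPair : PeriodPair where
  ω₁ := ω
  ω₂ := 1
  indep := by
    refine LinearIndependent.pair_iff.2 fun s t h => ?_
    have hs : s = 0 := by simpa [omega_im_ne_zero] using congrArg im h
    exact ⟨hs, by simpa [hs] using h⟩

theorem mem_hexagonalPeriodPair_lattice {γ : ℂ} : γ ∈ hexagonalPeriodPair.lattice ↔ inΛ γ := by
  simp only [PeriodPair.mem_lattice, inΛ, hexagonalPeriodPair, mul_one, eq_comm]

end HexagonalLattice

section ChiralModel

/-- The matrix `A(z)` for which `D(α)u = 0` reads `∂u/∂z̄ = A(z) u`; the prefactor comes from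
`2 D_{z̄} = -2 i ∂/∂z̄`. -/
def chiralPotential (U : ℂ → ℂ) (α z : ℂ) : ℂ × ℂ →L[ℂ] ℂ × ℂ :=
  (-(I * α / 2)) • (U z • (ContinuousLinearMap.inl ℂ ℂ ℂ ∘L ContinuousLinearMap.snd ℂ ℂ ℂ) +
    U (-z) • (ContinuousLinearMap.inr ℂ ℂ ℂ ∘L ContinuousLinearMap.fst ℂ ℂ ℂ))

theorem analyticAt_chiralPotential {U : ℂ → ℂ} (hU : RealAnalytic U) (α z : ℂ) :
    AnalyticAt ℝ (chiralPotential U α) z := by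
  have hU_neg : AnalyticAt ℝ (fun y => U (-y)) z := (hU (-z)).comp_of_eq (by fun_prop) rfl
  exact (analyticAt_const (v := -(I * α / 2))).smul
    (((hU z).smul analyticAt_const).add (hU_neg.smul analyticAt_const))

/-- The diagonal matrix of the Floquet conditions of momentum `p` on the two components. -/
def floquetFactor (p γ : ℂ) : ℂ × ℂ →L[ℂ] ℂ × ℂ :=
  (exp (I * (pairing (p - Kpt) γ : ℂ)) • ContinuousLinearMap.fst ℂ ℂ ℂ).prod
    (exp (I * (pairing (p + Kpt) γ : ℂ)) • ContinuousLinearMap.snd ℂ ℂ ℂ)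

theorem Dbar2_eq_dbar (f : ℂ → ℂ) (z : ℂ) : Dbar2 f z = -2 * I * dbar f z := by
  simp only [Dbar2, dbar, conjLinearCoeff_apply, smul_eq_mul]
  ring

theorem dbar_prodMk {f g : ℂ → ℂ} {z : ℂ} (hf : DifferentiableAt ℝ f z)
    (hg : DifferentiableAt ℝ g z) : dbar (fun y => (f y, g y)) z = (dbar f z, dbar g z) := by
  simp [dbar, conjLinearCoeff_apply, hf.fderiv_prodMk hg]

theorem Dbar2_add_eq_zero_iff {f : ℂ → ℂ} {z w : ℂ} :
    Dbar2 f z + w = 0 ↔ dbar f z = -(I / 2) * w := by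
  rw [Dbar2_eq_dbar]
  constructor <;> intro h
  · linear_combination (I / 2) * h + dbar f z * I_mul_I
  · linear_combination -2 * I * h + w * I_mul_I

theorem chiralPotential_apply (U : ℂ → ℂ) (α z : ℂ) (x : ℂ × ℂ) :
    chiralPotential U α z x = (-(I / 2) * (α * U z * x.2), -(I / 2) * (α * U (-z) * x.1)) := by
  ext <;> simp [chiralPotential] <;> ring

theorem memVp_iff {U : ℂ → ℂ} {α p : ℂ} {u : (ℂ → ℂ) × (ℂ → ℂ)} :
    memVp U α p u ↔ IsFloquetSolution (chiralPotential U α) hexagonalPeriodPair.lattice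
      (floquetFactor p) fun z => (u.1 z, u.2 z) := by
  constructor
  · rintro ⟨h₁, h₂, h_eq₁, h_eq₂, h_flo₁, h_flo₂⟩
    refine ⟨fun z => (h₁ z).prod (h₂ z), fun z => ?_, fun γ hγ z => ?_⟩
    · rw [dbar_prodMk (h₁ z).differentiableAt (h₂ z).differentiableAt, chiralPotential_apply,
        Dbar2_add_eq_zero_iff.1 (h_eq₁ z), Dbar2_add_eq_zero_iff.1 ((add_comm _ _).trans (h_eq₂ z))]
    · rw [mem_hexagonalPeriodPair_lattice] at hγ
      exact Prod.ext (h_flo₁ γ hγ z) (h_flo₂ γ hγ z)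
  · rintro ⟨h, h_eq, h_flo⟩
    have h₁ (z : ℂ) : AnalyticAt ℝ u.1 z := analyticAt_fst.comp (h z)
    have h₂ (z : ℂ) : AnalyticAt ℝ u.2 z := analyticAt_snd.comp (h z)
    have h_comp (z : ℂ) := h_eq z
    simp only [dbar_prodMk (h₁ _).differentiableAt (h₂ _).differentiableAt, chiralPotential_apply,
      Prod.mk.injEq, ← Dbar2_add_eq_zero_iff] at h_comp
    refine ⟨h₁, h₂, fun z => (h_comp z).1, fun z => (add_comm _ _).trans (h_comp z).2, ?_, ?_⟩
    · exact fun γ hγ z => congrArg Prod.fst (h_flo γ (mem_hexagonalPeriodPair_lattice.2 hγ) z)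
    · exact fun γ hγ z => congrArg Prod.snd (h_flo γ (mem_hexagonalPeriodPair_lattice.2 hγ) z)

end ChiralModel

theorem stmt10_general {U : ℂ → ℂ} (hU : RealAnalytic U) {α p : ℂ} {u : (ℂ → ℂ) × (ℂ → ℂ)}
    (hu : memVp U α p u) (hu0 : ¬ ∀ z, u.1 z = 0 ∧ u.2 z = 0) {ι : Type*} {z : ι → ℂ}
    (hz : ∀ i j, i ≠ j → ¬ inΛ (z i - z j)) (huz : ∀ i, u.1 (z i) = 0 ∧ u.2 (z i) = 0) :
    ∃ v : ι → (ℂ → ℂ) × (ℂ → ℂ), (∀ i, memVp U α p (v i)) ∧ LinearIndependent ℂ v := by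
  obtain ⟨v, hv, hv_ind⟩ := (memVp_iff.1 hu).exists_linearIndependent
    (analyticAt_chiralPotential hU α)
    (fun h => hu0 fun y => Prod.mk_eq_zero.1 (congrFun h y))
    (fun i j hij => mem_hexagonalPeriodPair_lattice.not.2 (hz i j hij))
    (fun i => Prod.mk_eq_zero.2 (huz i))
  let components : (ℂ → ℂ × ℂ) →ₗ[ℂ] (ℂ → ℂ) × (ℂ → ℂ) :=
    ((LinearMap.fst ℂ ℂ ℂ).compLeft ℂ).prod ((LinearMap.snd ℂ ℂ ℂ).compLeft ℂ)
  have h_inj : Function.Injective components := fun f g h => funext fun y =>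
    Prod.ext (congrFun (congrArg Prod.fst h) y) (congrFun (congrArg Prod.snd h) y)
  exact ⟨fun i => components (v i), fun i => memVp_iff.2 (hv i),
    hv_ind.map' components (LinearMap.ker_eq_bot.2 h_inj)⟩

theorem stmt10 (U : ℂ → ℂ) (hUan : RealAnalytic U)
    (hU1 : ∀ γ : ℂ, inΛ γ → ∀ z : ℂ,
      U (z + γ) = Complex.exp (Complex.I * (pairing γ Kpt : ℂ)) * U z)
    (hU2 : ∀ z : ℂ, U (ω * z) = ω * U z)
    (α p : ℂ) (u : (ℂ → ℂ) × (ℂ → ℂ)) (hu : memVp U α p u)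
    (hune : ¬ (∀ z : ℂ, u.1 z = 0 ∧ u.2 z = 0))
    (n : ℕ) (zpts : Fin n → ℂ)
    (hnc : ∀ i j : Fin n, i ≠ j → ¬ inΛ (zpts i - zpts j))
    (hvan : ∀ i : Fin n, u.1 (zpts i) = 0 ∧ u.2 (zpts i) = 0) :
    ∃ v : Fin n → (ℂ → ℂ) × (ℂ → ℂ),
      (∀ i : Fin n, memVp U α p (v i)) ∧ LinearIndependent ℂ v :=
  stmt10_general hUan hu hune hnc hvan

end
end
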